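/- arXiv:quant-ph/0302002 — 9 statements merged into one kernel-verified Lean document; each statement's English description precedes it below -/
import Mathlib

section
/- Fix n ≥ 1 and d ≥ 0 such that (n² − n + 1)^d < ∏_{i=0}^{n-1}(2^n − 2^i). Then there exists an invertible n×n matrix over 𝔽₂ that cannot be written as a product of at most d transvections. -/
/-- `A` is a transvection matrix over `𝔽₂`: the identity with a single
off-diagonal entry set to `1`. -/
def IsTransvection {n : ℕ} (A : Matrix (Fin n) (Fin n) (ZMod 2)) : Prop :=
  ∃ i j : Fin n, i ≠ j ∧ A = Matrix.transvection i j 1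

/-- `A` is a product of at most `d` transvections. -/
def IsProdOfAtMostTransvections {n : ℕ} (d : ℕ)
    (A : Matrix (Fin n) (Fin n) (ZMod 2)) : Prop :=
  ∃ L : List (Matrix (Fin n) (Fin n) (ZMod 2)),
    L.length ≤ d ∧ (∀ B ∈ L, IsTransvection B) ∧ L.prod = A

open scoped Pointwise in
open Classical in
theorem aux_mem_pow {n : ℕ} (S : Finset (Matrix (Fin n) (Fin n) (ZMod 2)))
    (h1 : (1 : Matrix (Fin n) (Fin n) (ZMod 2)) ∈ S) (d : ℕ) :
    ∀ L : List (Matrix (Fin n) (Fin n) (ZMod 2)), L.length ≤ d → (∀ B ∈ L, B ∈ S) →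
      L.prod ∈ S ^ d := by
  induction d with
  | zero =>
    intro L hL _
    have : L = [] := List.length_eq_zero_iff.mp (by omega)
    simp [this]
  | succ d ih =>
    intro L hL hS
    rw [pow_succ']
    cases L with
    | nil =>
      have := Finset.mul_mem_mul h1 (ih [] (by simp) (by simp))
      simpa using this
    | cons a L =>
      rw [List.prod_cons]
      refine Finset.mul_mem_mul (hS a (by simp)) (ih L ?_ ?_)
      · simpa using hL
      · intro B hB
        exact hS B (by simp [hB])

/-- If `(n² − n + 1)^d < ∏_{i=0}^{n-1}(2^n − 2^i)`, then some invertible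
`n × n` matrix over `𝔽₂` is not a product of at most `d` transvections. -/
theorem exists_not_prod_of_at_most_transvections (n d : ℕ) (hn : 1 ≤ n)
    (h : (n ^ 2 - n + 1) ^ d < ∏ i ∈ Finset.range n, (2 ^ n - 2 ^ i)) :
    ∃ A : Matrix (Fin n) (Fin n) (ZMod 2), IsUnit A ∧
      ¬ IsProdOfAtMostTransvections d A := by
  classical
  open scoped Pointwise in
  by_contra hcon
  push Not at hcon
  let T : Finset (Matrix (Fin n) (Fin n) (ZMod 2)) :=
    (Finset.univ : Finset (Fin n)).offDiag.image (fun p => Matrix.transvection p.1 p.2 1)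
  let S := insert 1 T
  have hS : S.card ≤ n ^ 2 - n + 1 := by
    refine (Finset.card_insert_le _ _).trans (Nat.add_le_add_right ?_ 1)
    refine Finset.card_image_le.trans ?_
    rw [Finset.offDiag_card]
    simp [sq]
  have hpow : (S ^ d).card ≤ (n ^ 2 - n + 1) ^ d :=
    Finset.card_pow_le.trans (Nat.pow_le_pow_left hS d)
  have hmem : ∀ g : GL (Fin n) (ZMod 2), (g : Matrix (Fin n) (Fin n) (ZMod 2)) ∈ S ^ d := by
    intro g
    obtain ⟨L, hL, hT, hp⟩ := hcon g g.isUnit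
    rw [← hp]
    refine aux_mem_pow S (Finset.mem_insert_self _ _) d L hL ?_
    intro B hB
    obtain ⟨i, j, hij, rfl⟩ := hT B hB
    refine Finset.mem_insert_of_mem (Finset.mem_image.mpr ⟨(i, j), ?_, rfl⟩)
    simp [hij]
  have hle : Nat.card (GL (Fin n) (ZMod 2)) ≤ (S ^ d).card := by
    rw [Nat.card_eq_fintype_card, ← Finset.card_univ]
    exact Finset.card_le_card_of_injOn (fun g => (g : Matrix (Fin n) (Fin n) (ZMod 2)))
      (fun g _ => hmem g) (fun a _ b _ hab => Units.ext hab)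
  rw [Matrix.card_GL_field, ZMod.card, Fin.prod_univ_eq_prod_range (fun i => 2 ^ n - 2 ^ i) n] at hle
  omega
end

section
/- For every n ≥ 2 there exists an invertible n×n matrix A over 𝔽₂ such that every list of transvections whose product equals A has length at least (n² − n) / log₂(n² − n + 1). -/
open scoped Pointwise in
lemma aux_list_prod_mem {M : Type*} [Monoid M] [DecidableEq M] (S : Finset M) (L : List M)
    (h : ∀ B ∈ L, B ∈ S) : L.prod ∈ S ^ L.length := by
  induction L with
  | nil => simp
  | cons a l ih =>
    simp only [List.prod_cons, List.length_cons, pow_succ']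
    exact Finset.mul_mem_mul (h a (by simp)) (ih fun B hB => h B (by simp [hB]))

lemma aux_card_GL (n : ℕ) : 2 ^ (n * n - n) ≤ Nat.card (GL (Fin n) (ZMod 2)) := by
  rw [Matrix.card_GL_field]
  have h : n * n - n = (n - 1) * n := by
    rw [Nat.sub_mul, one_mul]
  rw [h, pow_mul]
  have : ∀ i ∈ (Finset.univ : Finset (Fin n)), 2 ^ (n - 1) ≤
      (Fintype.card (ZMod 2) ^ n - Fintype.card (ZMod 2) ^ (i : ℕ)) := by
    intro i _
    rw [ZMod.card]
    have h1 : 2 ^ (i : ℕ) ≤ 2 ^ (n - 1) := Nat.pow_le_pow_right (by norm_num) (by omega)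
    have h2 : 2 ^ n = 2 * 2 ^ (n - 1) := by
      rw [← pow_succ']; congr 1; have := i.2; omega
    omega
  simpa using Finset.prod_le_prod' this

open scoped Pointwise in
/-- For every `n ≥ 2` there is an invertible `n × n` matrix over `𝔽₂` such that
every list of transvections with product `A` has length at least
`(n² − n) / log₂(n² − n + 1)`. -/
theorem exists_matrix_requiring_many_transvections (n : ℕ) (hn : 2 ≤ n) :
    ∃ A : Matrix (Fin n) (Fin n) (ZMod 2), IsUnit A ∧
      ∀ L : List (Matrix (Fin n) (Fin n) (ZMod 2)),
        (∀ B ∈ L, IsTransvection B) → L.prod = A →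
          ((n : ℝ) ^ 2 - n) / Real.logb 2 ((n : ℝ) ^ 2 - n + 1) ≤ L.length := by
  by_contra! H
  have hnn : n < n * n := by nlinarith
  obtain ⟨N, hN⟩ : ∃ N, N = n * n - n := ⟨_, rfl⟩
  have hNR : (n : ℝ) ^ 2 - n = N := by
    rw [hN, Nat.cast_sub hnn.le]; push_cast; ring
  have hN0 : 0 < N := by omega
  have hN0' : (0 : ℝ) < N := by exact_mod_cast hN0
  rw [hNR] at H
  have hlog : 0 < Real.logb 2 ((N : ℝ) + 1) := Real.logb_pos (by norm_num) (by linarith)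
  set x : ℝ := (N : ℝ) / Real.logb 2 ((N : ℝ) + 1) with hx
  have hx0 : 0 < x := div_pos hN0' hlog
  have hc : 0 < ⌈x⌉₊ := Nat.ceil_pos.2 hx0
  obtain ⟨D, hD⟩ : ∃ D, D = ⌈x⌉₊ - 1 := ⟨_, rfl⟩
  have hDx : (D : ℝ) < x := Nat.lt_ceil.1 (by omega)
  have hpow : (N + 1) ^ D < 2 ^ N := by
    have h1 : (D : ℝ) * Real.logb 2 ((N : ℝ) + 1) < N := (lt_div_iff₀ hlog).1 hDx
    have h2 : Real.logb 2 (((N : ℝ) + 1) ^ D) < N := by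
      rw [Real.logb_pow]; exact h1
    rw [Real.logb_lt_iff_lt_rpow (by norm_num) (by positivity), Real.rpow_natCast] at h2
    exact_mod_cast h2
  let S : Finset (Matrix (Fin n) (Fin n) (ZMod 2)) :=
    insert 1 ((Finset.univ : Finset (Fin n)).offDiag.image
      fun p => Matrix.transvection p.1 p.2 1)
  have hS : S.card ≤ N + 1 := by
    refine (Finset.card_insert_le _ _).trans ?_
    refine Nat.succ_le_succ (Finset.card_image_le.trans ?_)
    simp [Finset.offDiag_card, hN]
  have hS1 : (1 : Matrix (Fin n) (Fin n) (ZMod 2)) ∈ S := Finset.mem_insert_self _ _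
  have hmem : ∀ g : GL (Fin n) (ZMod 2), (g : Matrix (Fin n) (Fin n) (ZMod 2)) ∈ S ^ D := by
    intro g
    obtain ⟨L, hL, hLp, hlen⟩ := H g g.isUnit
    rw [← hLp]
    have h1 : L.length < ⌈x⌉₊ := Nat.lt_ceil.2 hlen
    refine Finset.pow_subset_pow_right hS1 (by omega : L.length ≤ D) (aux_list_prod_mem S L ?_)
    intro B hB
    obtain ⟨i, j, hij, rfl⟩ := hL B hB
    exact Finset.mem_insert_of_mem (Finset.mem_image.2 ⟨(i, j), by simp [hij], rfl⟩)
  have hcard : Nat.card (GL (Fin n) (ZMod 2)) ≤ (S ^ D).card := by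
    rw [Nat.card_eq_fintype_card, ← Finset.card_univ]
    exact Finset.card_le_card_of_injOn (fun g => (g : Matrix (Fin n) (Fin n) (ZMod 2)))
      (fun g _ => hmem g) (fun a _ b _ h => Units.ext h)
  have h3 := aux_card_GL n
  rw [← hN] at h3
  have h4 : (S ^ D).card ≤ S.card ^ D := Finset.card_pow_le
  have h5 : S.card ^ D ≤ (N + 1) ^ D := Nat.pow_le_pow_left hS D
  omega
end

section
/- There exists a constant c > 0 such that for every n ≥ 2 there exists an invertible n×n matrix A over 𝔽₂ with the property that every list of transvections whose product equals A has length at least c · n² / log₂ n. -/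
def gateMat {n : ℕ} (p : Fin n × Fin n) : Matrix (Fin n) (Fin n) (ZMod 2) :=
  if p.1 = p.2 then 1 else Matrix.transvection p.1 p.2 1

lemma exists_gates {n : ℕ} (L : List (Matrix (Fin n) (Fin n) (ZMod 2)))
    (h : ∀ B ∈ L, IsTransvection B) :
    ∃ l : List (Fin n × Fin n), l.length = L.length ∧ (l.map gateMat).prod = L.prod := by
  induction L with
  | nil => exact ⟨[], rfl, rfl⟩
  | cons B L ih =>
    obtain ⟨l, h1, h2⟩ := ih (fun B hB => h B (List.mem_cons_of_mem _ hB))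
    obtain ⟨i, j, hij, hB⟩ := h B List.mem_cons_self
    refine ⟨(i, j) :: l, by simp [h1], ?_⟩
    simp [h2, gateMat, hij, hB]

lemma count_bound {n k : ℕ} (hn : 2 ≤ n)
    (h : ∀ A : Matrix (Fin n) (Fin n) (ZMod 2), IsUnit A →
      ∃ L : List (Matrix (Fin n) (Fin n) (ZMod 2)),
        (∀ B ∈ L, IsTransvection B) ∧ L.prod = A ∧ L.length ≤ k) :
    2 ^ ((n - 1) * n) ≤ (n * n) ^ k := by
  have hlow : 2 ^ ((n - 1) * n) ≤ Nat.card (GL (Fin n) (ZMod 2)) := by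
    rw [Matrix.card_GL_field]
    rw [pow_mul]
    calc (2 ^ (n - 1)) ^ n = ∏ _i : Fin n, 2 ^ (n - 1) := by simp
      _ ≤ _ := by
        apply Finset.prod_le_prod'
        intro i _
        have h1 : 2 ^ (i : ℕ) ≤ 2 ^ (n - 1) := Nat.pow_le_pow_right (by norm_num) (by omega)
        have h2 : 2 ^ n = 2 ^ (n - 1) * 2 := by
          rw [← pow_succ]; congr 1; omega
        simp only [ZMod.card]
        omega
  refine hlow.trans ?_
  have hv : ∀ A : GL (Fin n) (ZMod 2), ∃ v : List.Vector (Fin n × Fin n) k,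
      (v.toList.map gateMat).prod = (A : Matrix (Fin n) (Fin n) (ZMod 2)) := by
    intro A
    obtain ⟨L, hL, hA, hk⟩ := h A A.isUnit
    obtain ⟨l, h1, h2⟩ := exists_gates L hL
    let z : Fin n := ⟨0, by omega⟩
    refine ⟨⟨l ++ List.replicate (k - l.length) (z, z), by simp; omega⟩, ?_⟩
    simp [h2, hA, gateMat]
  choose f hf using hv
  have hinj : Function.Injective f := by
    intro A B hAB
    apply Units.ext
    rw [← hf A, ← hf B, hAB]
  have := Nat.card_le_card_of_injective f hinj
  simpa [Nat.card_eq_fintype_card, card_vector] using this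

/-- Lower bound (Lemma 1): there is a constant `c > 0` such that for every
`n ≥ 2` some invertible `n × n` matrix over `𝔽₂` requires at least
`c · n² / log₂ n` transvections. -/
theorem exists_lower_bound_constant :
    ∃ c : ℝ, 0 < c ∧ ∀ n : ℕ, 2 ≤ n →
      ∃ A : Matrix (Fin n) (Fin n) (ZMod 2), IsUnit A ∧
        ∀ L : List (Matrix (Fin n) (Fin n) (ZMod 2)),
          (∀ B ∈ L, IsTransvection B) → L.prod = A →
            c * (n : ℝ) ^ 2 / Real.logb 2 n ≤ L.length := by
  refine ⟨1 / 8, by norm_num, fun n hn => ?_⟩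
  by_contra! hcon
  have hn' : (2 : ℝ) ≤ n := by exact_mod_cast hn
  have hlog : 0 < Real.logb 2 n := Real.logb_pos (by norm_num) (by linarith)
  set x : ℝ := 1 / 8 * (n : ℝ) ^ 2 / Real.logb 2 n with hx
  have hx0 : 0 ≤ x := by positivity
  have key := count_bound (k := ⌊x⌋₊) hn (fun A hA => by
    obtain ⟨L, h1, h2, h3⟩ := hcon A hA
    exact ⟨L, h1, h2, Nat.le_floor h3.le⟩)
  have key' : (2 : ℝ) ^ ((n - 1) * n) ≤ ((n : ℝ) * n) ^ ⌊x⌋₊ := by exact_mod_cast key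
  have h4 := Real.logb_le_logb_of_le (b := 2) (by norm_num) (by positivity) key'
  rw [Real.logb_pow, Real.logb_pow, Real.logb_mul (by positivity) (by positivity),
    Real.logb_self_eq_one (by norm_num)] at h4
  push_cast [Nat.cast_sub (show 1 ≤ n by omega)] at h4
  have h5 : (⌊x⌋₊ : ℝ) ≤ x := Nat.floor_le hx0
  have h6 : x * Real.logb 2 n = 1 / 8 * (n : ℝ) ^ 2 := by
    rw [hx]; field_simp
  have h7 := mul_le_mul_of_nonneg_right h5 hlog.le
  nlinarith
end

section
/- For every ε > 0 there exists N such that for all n ≥ N there exists an invertible n×n matrix A over 𝔽₂ with the property that every list of transvections whose product equals A has length at least (1/2 − ε) · n² / log₂ n. -/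
def pairMat {n : ℕ} (p : Fin n × Fin n) : Matrix (Fin n) (Fin n) (ZMod 2) :=
  if p.1 = p.2 then 1 else Matrix.transvection p.1 p.2 1

lemma exists_code {n : ℕ} (i0 : Fin n) (m : ℕ) :
    ∀ L : List (Matrix (Fin n) (Fin n) (ZMod 2)), (∀ B ∈ L, IsTransvection B) →
      L.length ≤ m → ∃ g : Fin m → Fin n × Fin n,
        (List.ofFn (fun k => pairMat (g k))).prod = L.prod := by
  induction m with
  | zero =>
    intro L _ h
    have : L = [] := List.length_eq_zero_iff.mp (by omega)
    subst this
    exact ⟨Fin.elim0, by simp⟩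
  | succ m ih =>
    intro L hL h
    cases L with
    | nil =>
      obtain ⟨g, hg⟩ := ih [] (by simp) (by simp)
      refine ⟨Fin.cons (i0, i0) g, ?_⟩
      rw [List.ofFn_succ, List.prod_cons]
      simp only [Fin.cons_zero, Fin.cons_succ, hg]
      simp [pairMat]
    | cons B L =>
      obtain ⟨g, hg⟩ := ih L (fun C hC => hL C (by simp [hC])) (by simpa using h)
      obtain ⟨i, j, hij, hB⟩ := hL B (by simp)
      refine ⟨Fin.cons (i, j) g, ?_⟩
      rw [List.ofFn_succ, List.prod_cons]
      simp only [Fin.cons_zero, Fin.cons_succ, hg]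
      simp [pairMat, hij, hB]

lemma card_GL_lower (n : ℕ) :
    2 ^ ((n - 1) * n) ≤ Nat.card (Matrix.GeneralLinearGroup (Fin n) (ZMod 2)) := by
  have h := Matrix.card_GL_field (𝔽 := ZMod 2) n
  rw [h, pow_mul]
  calc (2 ^ (n - 1)) ^ n = ∏ _i : Fin n, 2 ^ (n - 1) := by simp
    _ ≤ _ := by
      apply Finset.prod_le_prod' 
      intro i _
      rw [ZMod.card]
      have h1 : 2 ^ (i : ℕ) ≤ 2 ^ (n - 1) := Nat.pow_le_pow_right (by norm_num) (by omega)
      have h2 : 2 ^ n = 2 * 2 ^ (n - 1) := by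
        rw [← pow_succ']; congr 1; have := i.2; omega
      omega

/-- For every `ε > 0`, for all sufficiently large `n`, some invertible `n × n`
matrix over `𝔽₂` requires at least `(1/2 − ε) · n² / log₂ n` transvections. -/
theorem lower_bound_constant_half (ε : ℝ) (hε : 0 < ε) :
    ∃ N : ℕ, ∀ n : ℕ, N ≤ n →
      ∃ A : Matrix (Fin n) (Fin n) (ZMod 2), IsUnit A ∧
        ∀ L : List (Matrix (Fin n) (Fin n) (ZMod 2)),
          (∀ B ∈ L, IsTransvection B) → L.prod = A →
            (1 / 2 - ε) * (n : ℝ) ^ 2 / Real.logb 2 n ≤ L.length := by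
  refine ⟨max 2 ⌈1 / (2 * ε)⌉₊, fun n hn => ?_⟩
  have hn2 : 2 ≤ n := le_trans (le_max_left _ _) hn
  have hnε : 1 / (2 * ε) ≤ n := Nat.ceil_le.mp (le_trans (le_max_right _ _) hn)
  rw [div_le_iff₀ (by positivity)] at hnε
  have hn2r : (2 : ℝ) ≤ n := by exact_mod_cast hn2
  have hlog : 0 < Real.logb 2 n := Real.logb_pos (by norm_num) (by linarith)
  by_contra! hcon
  set x := (1 / 2 - ε) * (n : ℝ) ^ 2 / Real.logb 2 n with hx
  set m := ⌈x⌉₊ - 1 with hm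
  have key : ∀ A : Matrix.GeneralLinearGroup (Fin n) (ZMod 2), ∃ g : Fin m → Fin n × Fin n,
      (List.ofFn (fun k => pairMat (g k))).prod = (A : Matrix (Fin n) (Fin n) (ZMod 2)) := by
    intro A
    obtain ⟨L, hL, hLA, hlt⟩ := hcon A A.isUnit
    have : L.length < ⌈x⌉₊ := Nat.lt_ceil.mpr hlt
    obtain ⟨g, hg⟩ := exists_code ⟨0, by omega⟩ m L hL (by omega)
    exact ⟨g, hg.trans hLA⟩
  have hmx : (m : ℝ) < x := by
    obtain ⟨L, hL, hLA, hlt⟩ := hcon 1 isUnit_one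
    have : L.length < ⌈x⌉₊ := Nat.lt_ceil.mpr hlt
    exact Nat.lt_ceil.mp (by omega)
  choose g hg using key
  have ginj : Function.Injective g := by
    intro A B h
    apply Units.ext
    rw [← hg A, ← hg B, h]
  have hcard := Nat.card_le_card_of_injective g ginj
  have h1 := (card_GL_lower n).trans hcard
  simp only [Nat.card_eq_fintype_card, Fintype.card_fun, Fintype.card_prod, Fintype.card_fin] at h1
  have h2 : (2 : ℝ) ^ ((n - 1) * n) ≤ ((n : ℝ) * n) ^ m := by exact_mod_cast h1
  have h3 := Real.logb_le_logb_of_le (b := 2) (by norm_num) (by positivity) h2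
  rw [Real.logb_pow, Real.logb_pow, Real.logb_mul (by positivity) (by positivity),
    Real.logb_self_eq_one (by norm_num)] at h3
  push_cast [Nat.cast_sub (by omega : 1 ≤ n)] at h3
  rw [hx, lt_div_iff₀ hlog] at hmx
  nlinarith
end

section
/- For all natural numbers n ≥ 1 and m with 1 ≤ m ≤ n, every invertible n×n matrix over 𝔽₂ can be written as a product of at most n²/m + 3n + m + 2n·2^m + 2nm + 2m·2^m + 2m² transvections. -/
namespace AlgOne

abbrev Mat (n : ℕ) := Matrix (Fin n) (Fin n) (ZMod 2)

/-- `A` is carried to `B` by at most `t` row operations. -/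
def Cost {n : ℕ} (t : ℕ) (A B : Mat n) : Prop :=
  ∃ L : List (Mat n), (∀ T ∈ L, IsTransvection T) ∧ L.length ≤ t ∧ A = L.prod * B

def Inj {n : ℕ} (A : Mat n) : Prop := ∀ v : Fin n → ZMod 2, A.mulVec v = 0 → v = 0

lemma Cost.refl {n : ℕ} (A : Mat n) : Cost 0 A A := ⟨[], by simp, by simp, by simp⟩

lemma Cost.mono {n s t : ℕ} {A B : Mat n} (h : Cost s A B) (hst : s ≤ t) : Cost t A B := by
  obtain ⟨L, h1, h2, h3⟩ := h
  exact ⟨L, h1, h2.trans hst, h3⟩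

lemma Cost.trans {n s t : ℕ} {A B C : Mat n} (h : Cost s A B) (h' : Cost t B C) :
    Cost (s + t) A C := by
  obtain ⟨L, h1, h2, h3⟩ := h
  obtain ⟨M, g1, g2, g3⟩ := h'
  refine ⟨L ++ M, ?_, ?_, ?_⟩
  · intro T hT
    rcases List.mem_append.1 hT with h | h
    · exact h1 T h
    · exact g1 T h
  · simp; omega
  · rw [h3, g3, List.prod_append, Matrix.mul_assoc]

lemma Cost.inj {n t : ℕ} {A B : Mat n} (h : Cost t A B) (hA : Inj A) : Inj B := by
  obtain ⟨L, h1, h2, h3⟩ := h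
  intro v hv
  apply hA
  rw [h3, ← Matrix.mulVec_mulVec, hv, Matrix.mulVec_zero]

lemma zcases (x : ZMod 2) : x = 0 ∨ x = 1 := by
  revert x; decide

lemma cost_step {n : ℕ} (A : Mat n) (c r : Fin n) (h : c ≠ r) :
    Cost 1 A (Matrix.of fun i j => if i = c then A c j + A r j else A i j) := by
  refine ⟨[Matrix.transvection c r 1], ?_, by simp, ?_⟩
  · intro T hT
    simp at hT
    exact ⟨c, r, h, hT⟩
  · ext i j
    rw [List.prod_singleton]
    by_cases hi : i = c
    · subst hi
      rw [Matrix.transvection_mul_apply_same]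
      simp [h.symm, add_assoc, CharTwo.add_self_eq_zero]
    · rw [Matrix.transvection_mul_apply_of_ne _ _ _ _ hi]
      simp [hi]

lemma fan_in {n : ℕ} (c : Fin n) (S : Finset (Fin n)) (A : Mat n) (hc : c ∉ S) :
    Cost S.card A (Matrix.of fun i j => if i = c then A c j + ∑ l ∈ S, A l j else A i j) := by
  induction S using Finset.induction_on with
  | empty =>
    rw [Finset.card_empty]
    convert Cost.refl A using 1
    ext i j
    by_cases hi : i = c <;> simp [hi]
  | insert a S ha ih =>
    have hca : c ≠ a := fun h => hc (by simp [h])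
    have hcS : c ∉ S := fun h => hc (by simp [h])
    rw [Finset.card_insert_of_notMem ha]
    convert (ih hcS).trans (cost_step _ c a hca) using 1
    ext i j
    by_cases hi : i = c
    · simp [hi, hca.symm, Finset.sum_insert ha]; ring
    · simp [hi]

lemma fan_out {n : ℕ} (c : Fin n) (S : Finset (Fin n)) (A : Mat n) (hc : c ∉ S) :
    Cost S.card A (Matrix.of fun i j => if i ∈ S then A i j + A c j else A i j) := by
  induction S using Finset.induction_on with
  | empty =>
    rw [Finset.card_empty]
    convert Cost.refl A using 1
    ext i j
    simp
  | insert a S ha ih =>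
    have hca : c ≠ a := fun h => hc (by simp [h])
    have hcS : c ∉ S := fun h => hc (by simp [h])
    rw [Finset.card_insert_of_notMem ha]
    convert (ih hcS).trans (cost_step _ a c hca.symm) using 1
    ext i j
    by_cases hi : i = a
    · simp [hi, ha, hcS]
    · simp [hi]

/-- process one pattern -/
lemma pattern {n : ℕ} (p T : Finset (Fin n)) (A : Mat n) (h : Disjoint p T) :
    Cost (2 * p.card + T.card) A
      (Matrix.of fun i j => if i ∈ T then A i j + ∑ l ∈ p, A l j else A i j) := by
  rcases p.eq_empty_or_nonempty with rfl | ⟨c, hc⟩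
  · have h0 := (Cost.refl A).mono (Nat.zero_le (2 * (∅ : Finset (Fin n)).card + T.card))
    convert h0 using 1
    ext i j
    simp
  · have hcT : c ∉ T := Finset.disjoint_left.1 h hc
    have hce : c ∉ p.erase c := by simp
    have key := ((fan_in c (p.erase c) A hce).trans (fan_out c T _ hcT)).trans
      (fan_in c (p.erase c) _ hce)
    have hcard : (p.erase c).card ≤ p.card := Finset.card_le_card (Finset.erase_subset _ _)
    have key2 := key.mono (t := 2 * p.card + T.card) (by omega)
    convert key2 using 1
    ext i j
    have hsum : ∑ l ∈ p, A l j = A c j + ∑ l ∈ p.erase c, A l j :=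
      (Finset.add_sum_erase p (fun l => A l j) hc).symm
    by_cases hi : i = c
    · subst hi
      have : ∀ l ∈ p.erase i, (if l ∈ T then (if l = i then A i j + ∑ l ∈ p.erase i, A l j
          else A l j) + (A i j + ∑ l ∈ p.erase i, A l j) else
          if l = i then A i j + ∑ l ∈ p.erase i, A l j else A l j) = A l j := by
        intro l hl
        have h1 : l ∉ T := Finset.disjoint_left.1 h (Finset.mem_of_mem_erase hl)
        simp [h1, Finset.ne_of_mem_erase hl]
      simp only [Matrix.of_apply, if_true, hcT, if_false]
      rw [Finset.sum_congr rfl this, add_assoc, CharTwo.add_self_eq_zero, add_zero]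
    · simp [hi, hsum]

lemma block {n : ℕ} (D : Finset (Fin n)) (s : Fin n → Finset (Fin n)) (hs : ∀ i, s i ⊆ D)
    (A : Mat n) :
    Cost (2 * D.card * 2 ^ D.card + n) A
      (Matrix.of fun i j => if i ∈ D then A i j else A i j + ∑ l ∈ s i, A l j) := by
  have gen : ∀ Q : Finset (Finset (Fin n)), Q ⊆ D.powerset →
      Cost (∑ p ∈ Q, (2 * p.card + (Finset.univ.filter fun i => i ∉ D ∧ s i = p).card)) A
      (Matrix.of fun i j => if i ∉ D ∧ s i ∈ Q then A i j + ∑ l ∈ s i, A l j else A i j) := by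
    intro Q
    induction Q using Finset.induction_on with
    | empty =>
      intro _
      rw [Finset.sum_empty]
      convert Cost.refl A using 1
      ext i j
      simp
    | insert p Q hp ih =>
      intro hQ
      have hpD : p ⊆ D := Finset.mem_powerset.1 (hQ (Finset.mem_insert_self _ _))
      have ih' := ih ((Finset.subset_insert _ _).trans hQ)
      rw [Finset.sum_insert hp, add_comm]
      have hd : Disjoint p (Finset.univ.filter fun i => i ∉ D ∧ s i = p) := by
        rw [Finset.disjoint_left]
        intro a ha
        simp [hpD ha]
      convert ih'.trans (pattern p _ _ hd) using 1
      ext i j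
      have hs2 : ∑ l ∈ p, (if l ∉ D ∧ s l ∈ Q then A l j + ∑ l ∈ s l, A l j else A l j)
          = ∑ l ∈ p, A l j := by
        apply Finset.sum_congr rfl
        intro l hl
        simp [hpD hl]
      simp only [Matrix.of_apply, hs2, Finset.mem_filter, Finset.mem_univ, true_and,
        Finset.mem_insert]
      by_cases hi : i ∈ D
      · simp [hi]
      · by_cases hsi : s i = p
        · simp [hi, hsi, hp]
        · simp [hi, hsi]
  have h1 := gen D.powerset subset_rfl
  have hle : ∑ p ∈ D.powerset, (2 * p.card + (Finset.univ.filter fun i => i ∉ D ∧ s i = p).card)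
      ≤ 2 * D.card * 2 ^ D.card + n := by
    rw [Finset.sum_add_distrib]
    apply Nat.add_le_add
    · calc ∑ p ∈ D.powerset, 2 * p.card ≤ ∑ p ∈ D.powerset, 2 * D.card := by
            apply Finset.sum_le_sum
            intro p hp
            have := Finset.card_le_card (Finset.mem_powerset.1 hp)
            omega
        _ = _ := by simp [Finset.card_powerset, mul_comm]
    · calc _ ≤ ∑ p ∈ D.powerset, (Finset.univ.filter fun i => s i = p).card := by
            apply Finset.sum_le_sum
            intro p hp
            apply Finset.card_le_card
            intro i
            simp
        _ = (Finset.univ : Finset (Fin n)).card := by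
            rw [← Finset.card_eq_sum_card_fiberwise]
            intro i _
            simpa using hs i
        _ = n := by simp
  convert h1.mono hle using 1
  ext i j
  by_cases hi : i ∈ D <;> simp [hi, hs i]

/-- rows/columns `[k,c)` hold the identity, columns below `k` are done -/
def Q {n : ℕ} (k c : ℕ) (A : Mat n) : Prop :=
  ∀ i j : Fin n, j.val < c → (j.val < k ∨ (k ≤ i.val ∧ i.val < c)) →
    A i j = if i = j then 1 else 0

def rng (n k c : ℕ) : Finset (Fin n) := Finset.univ.filter fun l => k ≤ l.val ∧ l.val < c

lemma mem_rng {n k c : ℕ} {l : Fin n} : l ∈ rng n k c ↔ k ≤ l.val ∧ l.val < c := by simp [rng]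

lemma card_rng (n k c : ℕ) : (rng n k c).card ≤ c - k := by
  have : (rng n k c).card = ((rng n k c).map Fin.valEmbedding).card := by simp
  rw [this]
  have h : (rng n k c).map Fin.valEmbedding ⊆ Finset.Ico k c := by
    intro x
    simp only [Finset.mem_map, mem_rng, Finset.mem_Ico]
    rintro ⟨a, ha, rfl⟩
    exact ha
  simpa using Finset.card_le_card h

lemma sum_filter_one {n : ℕ} (D : Finset (Fin n)) (a b : Fin n → ZMod 2) :
    ∑ l ∈ D.filter (fun l => a l = 1), b l = ∑ l ∈ D, a l * b l := by
  rw [Finset.sum_filter]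
  apply Finset.sum_congr rfl
  intro l _
  rcases zcases (a l) with h | h <;> simp [h]

lemma exists_pivot {n : ℕ} (k : ℕ) (c : Fin n) (hkc : k ≤ c.val) (A : Mat n) (hA : Inj A)
    (hQ : Q k c.val A) :
    ∃ r : Fin n, c.val ≤ r.val ∧ A r c + ∑ l ∈ rng n k c.val, A r l * A l c = 1 := by
  by_contra hcon
  push Not at hcon
  let v : Fin n → ZMod 2 := fun l => if l = c then 1 else if l ∈ rng n k c.val then A l c else 0
  have hcr : c ∉ rng n k c.val := by simp [mem_rng]
  have hv : ∀ i, A.mulVec v i = A i c + ∑ l ∈ rng n k c.val, A i l * A l c := by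
    intro i
    have : ∀ l, A i l * v l = (if l = c then A i l else 0) +
        (if l ∈ rng n k c.val then A i l * A l c else 0) := by
      intro l
      by_cases h : l = c
      · subst h; simp [v, hcr]
      · simp [v, h]
    simp only [Matrix.mulVec, dotProduct, this, Finset.sum_add_distrib]
    simp
  set w := A.mulVec v with hw
  have hwz : ∀ i : Fin n, k ≤ i.val → w i = 0 := by
    intro i hi
    rw [hv]
    by_cases hic : i.val < c.val
    · have hm : i ∈ rng n k c.val := mem_rng.2 ⟨hi, hic⟩
      have : ∑ l ∈ rng n k c.val, A i l * A l c = A i c := by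
        rw [Finset.sum_eq_single i]
        · rw [hQ i i hic (Or.inr ⟨hi, hic⟩)]; simp
        · intro l hl hli
          rw [hQ i l (mem_rng.1 hl).2 (Or.inr ⟨hi, hic⟩), if_neg (Ne.symm hli), zero_mul]
        · exact fun h => absurd hm h
      rw [this, CharTwo.add_self_eq_zero]
    · exact (zcases _).resolve_right (hcon i (by omega))
  have hAw : A.mulVec w = w := by
    ext i
    simp only [Matrix.mulVec, dotProduct]
    rw [show w i = ∑ j, (if i = j then 1 else 0) * w j by simp]
    apply Finset.sum_congr rfl
    intro j _
    by_cases hj : j.val < k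
    · rw [hQ i j (by omega) (Or.inl hj)]
    · rw [hwz j (by omega)]; simp
  have h0 : v - w = 0 := by
    apply hA
    rw [Matrix.mulVec_sub, hAw, ← hw, sub_self]
  have h1 := congrFun h0 c
  simp [hwz c hkc, v] at h1

lemma pivot_step {n : ℕ} (k : ℕ) (c : Fin n) (hkc : k ≤ c.val) (A : Mat n) (hA : Inj A)
    (hQ : Q k c.val A) :
    ∃ B, Cost (1 + 2 * (c.val - k)) A B ∧ Q k (c.val + 1) B := by
  have hcr : c ∉ rng n k c.val := by simp [mem_rng]
  -- first make row `c` a good one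
  have s1 : ∃ B, Cost 1 A B ∧ Q k c.val B ∧
      B c c + ∑ l ∈ rng n k c.val, B c l * B l c = 1 := by
    by_cases hg : A c c + ∑ l ∈ rng n k c.val, A c l * A l c = 1
    · exact ⟨A, (Cost.refl A).mono (by omega), hQ, hg⟩
    · obtain ⟨r, hr, hr1⟩ := exists_pivot k c hkc A hA hQ
      have hne : c ≠ r := by rintro rfl; exact hg hr1
      have hg0 := (zcases _).resolve_right hg
      refine ⟨_, cost_step A c r hne, ?_, ?_⟩
      · intro i j hj hij
        by_cases hi : i = c
        · subst hi
          have hjk : j.val < k := by omega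
          have e1 : i ≠ j := by rintro rfl; omega
          have e2 : r ≠ j := by rintro rfl; omega
          simp [hQ i j hj (Or.inl hjk), hQ r j hj (Or.inl hjk), e1, e2]
        · simpa [hi] using hQ i j hj hij
      · have : ∀ l ∈ rng n k c.val, (if l = c then A c c + A r c else A l c) = A l c := by
          intro l hl
          rw [if_neg]
          rintro rfl; exact hcr hl
        simp only [Matrix.of_apply, if_true]
        rw [Finset.sum_congr rfl (fun l hl => by rw [this l hl])]
        simp only [add_mul, Finset.sum_add_distrib]
        linear_combination hg0 + hr1
  obtain ⟨B, hAB, hB, hBc⟩ := s1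
  let S := (rng n k c.val).filter (fun l => B c l = 1)
  have hcS : c ∉ S := fun h => hcr (Finset.mem_filter.1 h).1
  have hBC := fan_in c S B hcS
  set C : Mat n := Matrix.of fun i j => if i = c then B c j + ∑ l ∈ S, B l j else B i j with hC
  have hCne : ∀ i j, i ≠ c → C i j = B i j := by
    intro i j hi; simp [hC, hi]
  have hCc : ∀ j, C c j = B c j + ∑ l ∈ rng n k c.val, B c l * B l j := by
    intro j
    simp only [hC, Matrix.of_apply, if_true]
    rw [sum_filter_one]
  have hCcc : C c c = 1 := by rw [hCc, hBc]
  have hC0 : ∀ j : Fin n, j.val < c.val → C c j = 0 := by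
    intro j hj
    have hcj : c ≠ j := by rintro rfl; omega
    rw [hCc]
    by_cases hjk : j.val < k
    · rw [hB c j hj (Or.inl hjk), if_neg hcj, Finset.sum_eq_zero, add_zero]
      intro l hl
      have : l ≠ j := by rintro rfl; have := (mem_rng.1 hl).1; omega
      rw [hB l j hj (Or.inl hjk), if_neg this, mul_zero]
    · have : ∑ l ∈ rng n k c.val, B c l * B l j = B c j := by
        rw [Finset.sum_eq_single j]
        · rw [hB j j hj (Or.inr ⟨by omega, hj⟩)]; simp
        · intro l hl hlj
          rw [hB l j hj (Or.inr (mem_rng.1 hl)), if_neg hlj, mul_zero]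
        · intro h; exact absurd (mem_rng.2 ⟨by omega, hj⟩) h
      rw [this, CharTwo.add_self_eq_zero]
  let T := (rng n k c.val).filter (fun l => C l c = 1)
  have hcT : c ∉ T := fun h => hcr (Finset.mem_filter.1 h).1
  have hCD := fan_out c T C hcT
  refine ⟨_, ((hAB.trans hBC).trans hCD).mono ?_, ?_⟩
  · have h1 : S.card ≤ (rng n k c.val).card := Finset.card_le_card (Finset.filter_subset _ _)
    have h2 : T.card ≤ (rng n k c.val).card := Finset.card_le_card (Finset.filter_subset _ _)
    have h3 := card_rng n k c.val
    omega
  · intro i j hj hij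
    simp only [Matrix.of_apply]
    by_cases hjc : j = c
    · subst hjc
      have hik : k ≤ i.val ∧ i.val < j.val + 1 := by omega
      by_cases hi : i = j
      · subst hi; simp [hcT, hCcc]
      · have hlt : i.val < j.val := by
          have : i.val ≠ j.val := fun h => hi (Fin.ext h)
          omega
        have hm : i ∈ rng n k j.val := mem_rng.2 ⟨hik.1, hlt⟩
        rw [if_neg hi, hCcc]
        rcases zcases (C i j) with h | h
        · simp [T, h]
        · simp [T, h, hm, CharTwo.add_self_eq_zero]
    · have hlt : j.val < c.val := by
        have : j.val ≠ c.val := fun h => hjc (Fin.ext h)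
        omega
      rw [hC0 j hlt, add_zero, ite_self]
      by_cases hi : i = c
      · subst hi; rw [hC0 j hlt, if_neg (Ne.symm hjc)]
      · rw [hCne i j hi]
        apply hB i j hlt
        have : i.val ≠ c.val := fun h => hi (Fin.ext h)
        omega

lemma pivots {n : ℕ} (k d : ℕ) (hkd : k + d ≤ n) (A : Mat n) (hA : Inj A)
    (hQ : Q k k A) : ∃ B, Cost (d * (1 + 2 * d)) A B ∧ Q k (k + d) B := by
  have gen : ∀ e ≤ d, ∃ B, Cost (e * (1 + 2 * d)) A B ∧ Q k (k + e) B := by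
    intro e
    induction e with
    | zero => intro _; exact ⟨A, (Cost.refl A).mono (by omega), hQ⟩
    | succ e ih =>
      intro he
      obtain ⟨B, h1, h2⟩ := ih (by omega)
      obtain ⟨C, h3, h4⟩ := pivot_step k ⟨k + e, by omega⟩ (by simp) B (h1.inj hA) h2
      refine ⟨C, (h1.trans h3).mono ?_, h4⟩
      simp only [add_tsub_cancel_left]
      rw [add_mul e 1]
      omega
  exact gen d le_rfl

lemma section_step {n : ℕ} (k d : ℕ) (hkd : k + d ≤ n) (A : Mat n) (hA : Inj A)
    (hQ : Q k k A) :
    ∃ B, Cost (d * (1 + 2 * d) + (2 * d * 2 ^ d + n)) A B ∧ Q (k + d) (k + d) B := by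
  obtain ⟨B, h1, h2⟩ := pivots k d hkd A hA hQ
  have h3 := block (rng n k (k + d)) (fun i => (rng n k (k + d)).filter (fun l => B i l = 1))
    (fun i => Finset.filter_subset _ _) B
  have hc : (rng n k (k + d)).card ≤ d := by simpa using card_rng n k (k + d)
  refine ⟨_, h1.trans (h3.mono ?_), ?_⟩
  · gcongr
    norm_num
  · intro i j hj _
    simp only [Matrix.of_apply]
    rw [sum_filter_one (rng n k (k + d)) (fun l => B i l) (fun l => B l j)]
    by_cases hi : i ∈ rng n k (k + d)
    · rw [if_pos hi]
      exact h2 i j hj (Or.inr (mem_rng.1 hi))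
    · rw [if_neg hi]
      have e : ∑ l ∈ rng n k (k + d), B i l * B l j
          = if j ∈ rng n k (k + d) then B i j else 0 := by
        rw [← Finset.sum_ite_eq' (rng n k (k + d)) j (fun l => B i l)]
        apply Finset.sum_congr rfl
        intro l hl
        rw [h2 l j hj (Or.inr (mem_rng.1 hl))]
        simp
      rw [e]
      by_cases hjm : j ∈ rng n k (k + d)
      · have : i ≠ j := by rintro rfl; exact hi hjm
        rw [if_pos hjm, if_neg this, CharTwo.add_self_eq_zero]
      · have : j.val < k := by
          by_contra h
          exact hjm (mem_rng.2 ⟨by omega, hj⟩)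
        rw [if_neg hjm, add_zero]
        exact h2 i j hj (Or.inl this)

lemma sections {n : ℕ} (m : ℕ) (A : Mat n) (hA : Inj A) (s : ℕ) :
    ∃ B, Cost (s * (m * (1 + 2 * m) + (2 * m * 2 ^ m + n))) A B ∧
      Q (min (s * m) n) (min (s * m) n) B := by
  induction s with
  | zero =>
    refine ⟨A, (Cost.refl A).mono (by omega), ?_⟩
    intro i j hj
    simp at hj
  | succ s ih =>
    obtain ⟨B, h1, h2⟩ := ih
    have hle : min (s * m) n ≤ min ((s + 1) * m) n := by
      rw [Nat.succ_mul]; omega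
    have hle2 : min ((s + 1) * m) n - min (s * m) n ≤ m := by
      rw [Nat.succ_mul]; omega
    obtain ⟨C, h3, h4⟩ := section_step (min (s * m) n) (min ((s + 1) * m) n - min (s * m) n)
      (by omega) B (h1.inj hA) h2
    rw [Nat.add_sub_cancel' hle] at h4
    refine ⟨C, (h1.trans (h3.mono ?_)).mono (Nat.succ_mul _ _).ge, h4⟩
    gcongr
    norm_num

end AlgOne

/-- Upper bound from Algorithm 1 with section size `m`: every invertible
`n × n` matrix over `𝔽₂` is a product of at most
`n²/m + 3n + m + 2n·2^m + 2nm + 2m·2^m + 2m²` transvections. -/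
theorem algorithm_one_gate_count (n m : ℕ) (hm : 1 ≤ m) (hmn : m ≤ n)
    (A : Matrix (Fin n) (Fin n) (ZMod 2)) (hA : IsUnit A) :
    ∃ L : List (Matrix (Fin n) (Fin n) (ZMod 2)),
      (∀ B ∈ L, IsTransvection B) ∧ L.prod = A ∧
      (L.length : ℝ) ≤ (n : ℝ) ^ 2 / m + 3 * n + m + 2 * n * 2 ^ m
        + 2 * n * m + 2 * m * 2 ^ m + 2 * m ^ 2 := by
  have hinj : AlgOne.Inj A := by
    intro v hv
    exact Matrix.mulVec_injective_of_isUnit hA (by rw [hv, Matrix.mulVec_zero])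
  obtain ⟨B, ⟨L, h1, h2, h3⟩, hQ⟩ := AlgOne.sections m A hinj (n / m + 1)
  have hge : n ≤ (n / m + 1) * m := by
    have := Nat.lt_mul_div_succ n hm
    rw [mul_comm]; exact this.le
  rw [min_eq_right hge] at hQ
  have hB : B = 1 := by
    ext i j
    rw [hQ i j j.2 (Or.inl j.2), Matrix.one_apply]
  refine ⟨L, h1, by rw [h3, hB, mul_one], ?_⟩
  have hmpos : (0 : ℝ) < m := by exact_mod_cast hm
  have hdiv : ((n / m : ℕ) : ℝ) ≤ (n : ℝ) / m := Nat.cast_div_le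
  have h2' : (L.length : ℝ) ≤ (((n / m : ℕ) : ℝ) + 1) *
      (m * (1 + 2 * m) + (2 * m * 2 ^ m + n)) := by exact_mod_cast h2
  have hn0 : (0 : ℝ) ≤ n := Nat.cast_nonneg n
  calc (L.length : ℝ) ≤ (((n / m : ℕ) : ℝ) + 1) * (m * (1 + 2 * m) + (2 * m * 2 ^ m + n)) := h2'
    _ ≤ ((n : ℝ) / m + 1) * (m * (1 + 2 * m) + (2 * m * 2 ^ m + n)) := by gcongr
    _ = (n : ℝ) ^ 2 / m + 2 * n + m + 2 * n * 2 ^ m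
        + 2 * n * m + 2 * m * 2 ^ m + 2 * m ^ 2 := by
      field_simp
      ring
    _ ≤ _ := by linarith
end

section
/- There exists a constant C > 0 such that for every n ≥ 2, every invertible n×n matrix over 𝔽₂ can be written as a product of at most C · n² / log₂ n transvections. -/
namespace CNot

open Matrix Finset

/-- `M` is a product of at most `k` transvections. -/
def T {n : ℕ} (k : ℕ) (M : Matrix (Fin n) (Fin n) (ZMod 2)) : Prop :=
  ∃ L : List (Matrix (Fin n) (Fin n) (ZMod 2)),
    (∀ B ∈ L, IsTransvection B) ∧ L.prod = M ∧ L.length ≤ k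

variable {n : ℕ}

theorem T_one (k : ℕ) : T k (1 : Matrix (Fin n) (Fin n) (ZMod 2)) :=
  ⟨[], by simp, by simp, by simp⟩

theorem T_mono {a b : ℕ} (h : a ≤ b) {M : Matrix (Fin n) (Fin n) (ZMod 2)} (hM : T a M) :
    T b M := by
  obtain ⟨L, h1, h2, h3⟩ := hM
  exact ⟨L, h1, h2, h3.trans h⟩

theorem T_mul {a b : ℕ} {M N : Matrix (Fin n) (Fin n) (ZMod 2)} (hM : T a M) (hN : T b N) :
    T (a + b) (M * N) := by
  obtain ⟨L, h1, h2, h3⟩ := hM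
  obtain ⟨L', h1', h2', h3'⟩ := hN
  refine ⟨L ++ L', ?_, by simp [h2, h2'], by simp; omega⟩
  intro B hB
  rcases List.mem_append.1 hB with h | h
  · exact h1 B h
  · exact h1' B h

theorem T_single {i j : Fin n} (h : i ≠ j) :
    T 1 (1 + Matrix.single i j (1 : ZMod 2)) :=
  ⟨[1 + Matrix.single i j 1], by
    intro B hB
    rw [List.mem_singleton] at hB
    exact ⟨i, j, h, hB⟩, by simp, by simp⟩

theorem T_inv {k : ℕ} {M : Matrix (Fin n) (Fin n) (ZMod 2)} (hM : T k M) :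
    ∃ N, T k N ∧ N * M = 1 ∧ M * N = 1 := by
  obtain ⟨L, h1, h2, h3⟩ := hM
  induction L generalizing M k with
  | nil => exact ⟨1, T_one _, by simp [← h2], by simp [← h2]⟩
  | cons B L ih =>
    obtain ⟨N, hN, e1, e2⟩ := ih (k := L.length) (M := L.prod)
      (fun C hC => h1 C (List.mem_cons_of_mem _ hC)) rfl le_rfl
    obtain ⟨i, j, hij, rfl⟩ := h1 B List.mem_cons_self
    have hB : transvection i j (1 : ZMod 2) * transvection i j 1 = 1 := by
      rw [transvection_mul_transvection_same _ _ hij]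
      have : (1 + 1 : ZMod 2) = 0 := by decide
      rw [this, transvection_zero]
    have hT : T 1 (transvection i j (1 : ZMod 2)) := T_single hij
    refine ⟨N * transvection i j 1, T_mono (by simpa using h3) (T_mul hN hT), ?_, ?_⟩
    · rw [← h2, List.prod_cons, Matrix.mul_assoc, ← Matrix.mul_assoc (transvection i j 1), hB,
        Matrix.one_mul, e1]
    · rw [← h2, List.prod_cons, Matrix.mul_assoc, ← Matrix.mul_assoc _ N, e2,
        Matrix.one_mul, hB]

theorem T_col_aux (s : Fin n) (F : Finset (Fin n)) (hs : s ∉ F) :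
    T F.card (1 + ∑ i ∈ F, Matrix.single i s (1 : ZMod 2)) := by
  induction F using Finset.induction_on with
  | empty => simpa using T_one 0
  | insert a F ha ih =>
    rw [Finset.mem_insert, not_or] at hs
    have h := T_mul (ih hs.2) (T_single (n := n) (i := a) (j := s) (Ne.symm hs.1))
    rw [Finset.card_insert_of_notMem ha]
    convert h using 1
    rw [Finset.sum_insert ha, Matrix.add_mul, Matrix.mul_add, Matrix.mul_add]
    have : (∑ i ∈ F, Matrix.single i s (1 : ZMod 2)) * Matrix.single a s 1 = 0 := by
      rw [Finset.sum_mul]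
      apply Finset.sum_eq_zero
      intro i _
      simp [Matrix.single_mul_single_of_ne, hs.1]
    rw [this]
    simp
    abel

theorem T_row_aux (s : Fin n) (F : Finset (Fin n)) (hs : s ∉ F) :
    T F.card (1 + ∑ i ∈ F, Matrix.single s i (1 : ZMod 2)) := by
  induction F using Finset.induction_on with
  | empty => simpa using T_one 0
  | insert a F ha ih =>
    rw [Finset.mem_insert, not_or] at hs
    have h := T_mul (ih hs.2) (T_single (n := n) (i := s) (j := a) hs.1)
    rw [Finset.card_insert_of_notMem ha]
    convert h using 1
    rw [Finset.sum_insert ha, Matrix.add_mul, Matrix.mul_add, Matrix.mul_add]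
    have : (∑ i ∈ F, Matrix.single s i (1 : ZMod 2)) * Matrix.single s a 1 = 0 := by
      rw [Finset.sum_mul]
      apply Finset.sum_eq_zero
      intro i hi
      have : i ≠ s := fun h => hs.2 (h ▸ hi)
      simp [Matrix.single_mul_single_of_ne, this]
    rw [this]
    simp
    abel

theorem zmod2_ne {a : ZMod 2} (h : a ≠ 0) : a = 1 := by
  revert a; decide

theorem zmod2_add (a : ZMod 2) : a + a = 0 := by
  revert a; decide

theorem T_col (s : Fin n) (u : Fin n → ZMod 2) (hs : u s = 0) :
    T (univ.filter (fun i => u i ≠ 0)).card (1 + vecMulVec u (Pi.single s 1)) := by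
  convert T_col_aux s (univ.filter (fun i => u i ≠ 0)) (by simp [hs]) using 2
  ext i j
  rw [Matrix.sum_apply, Finset.sum_filter, Finset.sum_eq_single i]
  · by_cases h : u i = 0
    · simp [vecMulVec_apply, h]
    · have := zmod2_ne h
      by_cases hj : s = j
      · subst hj; simp [vecMulVec_apply, this]
      · simp [vecMulVec_apply, this, Pi.single_apply, hj, Ne.symm hj]
  · intro b _ hb
    simp [Matrix.single_apply, hb]
  · simp

theorem T_row (s : Fin n) (u : Fin n → ZMod 2) (hs : u s = 0) :
    T (univ.filter (fun i => u i ≠ 0)).card (1 + vecMulVec (Pi.single s 1) u) := by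
  convert T_row_aux s (univ.filter (fun i => u i ≠ 0)) (by simp [hs]) using 2
  ext i j
  rw [Matrix.sum_apply, Finset.sum_filter, Finset.sum_eq_single j]
  · by_cases h : u j = 0
    · simp [vecMulVec_apply, h]
    · have := zmod2_ne h
      by_cases hj : s = i
      · subst hj; simp [vecMulVec_apply, this]
      · simp [vecMulVec_apply, this, Pi.single_apply, hj, Ne.symm hj]
  · intro b _ hb
    simp [Matrix.single_apply, hb]
  · simp

theorem card_supp_le {S : Finset (Fin n)} {u : Fin n → ZMod 2} (h : ∀ i, i ∉ S → u i = 0) :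
    (univ.filter (fun i => u i ≠ 0)).card ≤ S.card := by
  apply Finset.card_le_card
  intro i hi
  by_contra hS
  simp [h i hS] at hi

theorem T_rank_one (S : Finset (Fin n)) (u v : Fin n → ZMod 2)
    (hu : ∀ i ∈ S, u i = 0) (hv : ∀ i, i ∉ S → v i = 0) :
    T ((univ.filter (fun i => u i ≠ 0)).card + 2 * S.card) (1 + vecMulVec u v) := by
  by_cases h0 : v = 0
  · subst h0
    have : vecMulVec u (0 : Fin n → ZMod 2) = 0 := by ext; simp [vecMulVec_apply]
    rw [this, add_zero]
    exact T_one _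
  obtain ⟨s, hs⟩ : ∃ s, v s ≠ 0 := by
    by_contra h; push Not at h; exact h0 (funext h)
  have hsS : s ∈ S := by by_contra h; exact hs (hv s h)
  have hs1 := zmod2_ne hs
  set w : Fin n → ZMod 2 := v + Pi.single s 1 with hw
  have hws : w s = 0 := by simp [hw, hs1, zmod2_add]
  have hD := T_mono (card_supp_le (S := S) (by
    intro i hi
    have : i ≠ s := fun h => hi (h ▸ hsS)
    simp [hw, this, hv i hi])) (T_row s w hws)
  have hU := T_col s u (hu s hsS)
  have hdot : w ⬝ᵥ u = 0 := by
    apply Finset.sum_eq_zero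
    intro i _
    by_cases hi : i ∈ S
    · simp [hu i hi]
    · have : i ≠ s := fun h => hi (h ▸ hsS)
      simp [hw, this, hv i hi]
  have hww : w ⬝ᵥ (Pi.single s 1 : Fin n → ZMod 2) = 0 := by simp [hws]
  have hss : (Pi.single s 1 : Fin n → ZMod 2) ⬝ᵥ Pi.single s 1 = 1 := by simp
  have hv' : v = Pi.single s 1 + w := by
    rw [hw, add_comm, add_assoc, ← Pi.single_add, zmod2_add]; simp
  have key : (1 + vecMulVec (Pi.single s 1) w) * (1 + vecMulVec u (Pi.single s 1)) *
      (1 + vecMulVec (Pi.single s 1) w) = 1 + vecMulVec u v := by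
    have e : vecMulVec (Pi.single s 1) w + vecMulVec (Pi.single s 1) w
      = (0 : Matrix (Fin n) (Fin n) (ZMod 2)) := by
      ext; simp [zmod2_add]
    simp only [Matrix.add_mul, Matrix.mul_add, Matrix.one_mul, Matrix.mul_one,
      vecMulVec_mul_vecMulVec, hdot, hww, hss, hv', vecMulVec_add]
    simp only [zero_smul, one_smul, vecMulVec_zero, zero_dotProduct, add_zero]
    rw [show (1 + vecMulVec (Pi.single s 1) w + vecMulVec u (Pi.single s 1) + (vecMulVec (Pi.single s 1) w + vecMulVec u w) : Matrix (Fin n) (Fin n) (ZMod 2)) =  1 + (vecMulVec u (Pi.single s 1) + vecMulVec u w) + (vecMulVec (Pi.single s 1) w +vecMulVec (Pi.single s 1) w) by abel, e, add_zero]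
  rw [← key]
  exact T_mono (by omega) (T_mul (T_mul hD hU) hD)

theorem T_sum (S : Finset (Fin n)) (W : Finset (Fin n → ZMod 2))
    (u : (Fin n → ZMod 2) → Fin n → ZMod 2)
    (hu : ∀ p, ∀ i ∈ S, u p i = 0) (hW : ∀ p ∈ W, ∀ i, i ∉ S → p i = 0) :
    T (∑ p ∈ W, ((univ.filter (fun i => u p i ≠ 0)).card + 2 * S.card))
      (1 + ∑ p ∈ W, vecMulVec (u p) p) := by
  induction W using Finset.induction_on with
  | empty => simpa using T_one 0
  | insert a W ha ih =>
    have h := T_mul (T_rank_one S (u a) a (hu a) (hW a (by simp)))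
      (ih (fun p hp => hW p (by simp [hp])))
    rw [Finset.sum_insert ha, Finset.sum_insert ha]
    convert h using 1
    rw [Matrix.add_mul, Matrix.mul_add, Matrix.mul_add]
    have : vecMulVec (u a) a * ∑ p ∈ W, vecMulVec (u p) p = 0 := by
      rw [Finset.mul_sum]
      apply Finset.sum_eq_zero
      intro p _
      have : a ⬝ᵥ u p = 0 := by
        apply Finset.sum_eq_zero
        intro i _
        by_cases hi : i ∈ S
        · simp [hu p i hi]
        · simp [hW a (by simp) i hi]
      rw [vecMulVec_mul_vecMulVec, this]
      simp
    rw [this]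
    simp
    abel

theorem T_clear (S : Finset (Fin n)) (V : Matrix (Fin n) (Fin n) (ZMod 2))
    (hV : ∀ i j, V i j ≠ 0 → i ∉ S ∧ j ∈ S) :
    T (n + 2 * S.card * 2 ^ S.card) (1 + V) := by
  classical
  set W : Finset (Fin n → ZMod 2) := univ.filter (fun p => ∀ i, i ∉ S → p i = 0) with hWdef
  set u : (Fin n → ZMod 2) → Fin n → ZMod 2 :=
    fun p i => if i ∉ S ∧ V i = p then 1 else 0 with hu
  have h := T_sum S W u (by intro p i hi; simp [hu, hi]) (by intro p hp; simpa [hWdef] using hp)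
  have hWc : W.card ≤ 2 ^ S.card := by
    have : W.card ≤ (univ : Finset (S → ZMod 2)).card := by
      apply Finset.card_le_card_of_injOn (fun p (i : S) => p i.1) (by simp)
      intro p hp q hq hpq
      funext i
      by_cases hi : i ∈ S
      · exact congrFun hpq ⟨i, hi⟩
      · simp [hWdef] at hp hq
        rw [hp i hi, hq i hi]
    simpa [ZMod.card] using this
  have hsum : ∑ p ∈ W, (univ.filter (fun i => u p i ≠ 0)).card ≤ n := by
    rw [← Finset.card_biUnion]
    · exact (Finset.card_le_univ _).trans (by simp)
    · intro p _ q _ hpq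
      rw [Function.onFun, Finset.disjoint_left]
      intro i hi hi'
      simp [hu] at hi hi'
      exact hpq (hi.2.symm.trans hi'.2)
  have hVe : V = ∑ p ∈ W, vecMulVec (u p) p := by
    ext i j
    rw [Matrix.sum_apply, Finset.sum_eq_single (V i)]
    · by_cases hi : i ∈ S
      · have : V i j = 0 := by by_contra h; exact (hV i j h).1 hi
        simp [vecMulVec_apply, this]
      · simp [vecMulVec_apply, hu, hi]
    · intro p _ hp
      simp [vecMulVec_apply, hu, Ne.symm hp]
    · intro h
      exfalso; apply h
      simp only [hWdef, Finset.mem_filter, Finset.mem_univ, true_and]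
      intro k hk
      by_contra h'; exact hk (hV i k h').2
  rw [hVe]
  refine T_mono ?_ h
  rw [Finset.sum_add_distrib, Finset.sum_const, smul_eq_mul]
  nlinarith

/-- Columns in `P` are standard unit vectors. -/
def Std (P : Finset (Fin n)) (A : Matrix (Fin n) (Fin n) (ZMod 2)) : Prop :=
  ∀ j ∈ P, ∀ i, A i j = if i = j then 1 else 0

/-- The block on `S` is the identity. -/
def Blk (S : Finset (Fin n)) (A : Matrix (Fin n) (Fin n) (ZMod 2)) : Prop :=
  ∀ j ∈ S, ∀ i ∈ S, A i j = if i = j then 1 else 0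

theorem exists_pivot (A : Matrix (Fin n) (Fin n) (ZMod 2)) (hA : IsUnit A)
    (P S : Finset (Fin n)) (hP : Std P A) (hS : Blk S A)
    (s : Fin n) (hsP : s ∉ P) (hsS : s ∉ S) :
    ∃ r, r ∉ P ∧ r ∉ S ∧ A r s + ∑ t ∈ S, A r t * A t s ≠ 0 := by
  by_contra hcon
  push Not at hcon
  set f : Fin n → ZMod 2 := fun r => A r s + ∑ t ∈ S, A r t * A t s with hf
  have hfS : ∀ r ∈ S, f r = 0 := by
    intro r hr
    have : ∑ t ∈ S, A r t * A t s = A r s := by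
      rw [Finset.sum_eq_single r]
      · simp [hS r hr r hr]
      · intro t ht htr
        simp [hS t ht r hr, Ne.symm htr]
      · exact fun h => absurd hr h
    simp only [hf, this, zmod2_add]
  set x : Fin n → ZMod 2 := fun i => (if i = s then 1 else 0) + (if i ∈ S then A i s else 0)
    + (if i ∈ P then f i else 0) with hx
  have hAx : A *ᵥ x = 0 := by
    funext r
    have : (A *ᵥ x) r = f r + ∑ p ∈ P, A r p * f p := by
      simp only [mulVec, dotProduct, hx, mul_add, Finset.sum_add_distrib, mul_ite, mul_one,
        mul_zero, Finset.sum_ite_eq', Finset.mem_univ, if_true, Finset.sum_ite_mem,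
        Finset.univ_inter, hf]
    rw [this]
    by_cases hr : r ∈ P
    · rw [Finset.sum_eq_single r]
      · simp [hP r hr r, zmod2_add]
      · intro p hp hpr
        simp [hP p hp r, Ne.symm hpr]
      · exact fun h => absurd hr h
    · rw [Finset.sum_eq_zero]
      · by_cases hrS : r ∈ S
        · simp [hfS r hrS]
        · simpa using hcon r hr hrS
      · intro p hp
        have : r ≠ p := fun h => hr (h ▸ hp)
        simp [hP p hp r, this]
  have hx0 : x = 0 := by
    obtain ⟨N, hN⟩ := hA.exists_left_inv
    rw [← Matrix.one_mulVec x, ← hN, ← Matrix.mulVec_mulVec, hAx, Matrix.mulVec_zero]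
  have := congrFun hx0 s
  simp [hx, hsP, hsS] at this

theorem mul_apply_aux (u v : Fin n → ZMod 2) (A : Matrix (Fin n) (Fin n) (ZMod 2)) (i j : Fin n) :
    ((1 + vecMulVec u v) * A) i j = A i j + u i * ∑ k, v k * A k j := by
  rw [Matrix.add_mul, Matrix.one_mul, Matrix.add_apply, Matrix.mul_apply, Finset.mul_sum]
  simp only [vecMulVec_apply, mul_assoc]

theorem block_step (A : Matrix (Fin n) (Fin n) (ZMod 2)) (hA : IsUnit A)
    (P S : Finset (Fin n)) (hPS : Disjoint P S) (hP : Std P A) (hS : Blk S A)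
    (s : Fin n) (hsP : s ∉ P) (hsS : s ∉ S) :
    ∃ M, T (2 * S.card + 1) M ∧ Std P (M * A) ∧ Blk (insert s S) (M * A) := by
  have hSP : ∀ i ∈ S, i ∉ P := fun i hi hi' => Finset.disjoint_left.1 hPS hi' hi
  -- first step
  obtain ⟨M1, hM1, h1i, h1P, h1s⟩ : ∃ M1, T 1 M1 ∧ (∀ i, i ≠ s → ∀ j, (M1 * A) i j = A i j) ∧
      Std P (M1 * A) ∧ (M1 * A) s s + ∑ t ∈ S, (M1 * A) s t * A t s = 1 := by
    by_cases h : A s s + ∑ t ∈ S, A s t * A t s = 0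
    · obtain ⟨r, hrP, hrS, hr⟩ := exists_pivot A hA P S hP hS s hsP hsS
      have hrs : s ≠ r := by rintro rfl; exact hr h
      have e1 : ∀ i, i ≠ s → ∀ j, ((1 + Matrix.single s r (1 : ZMod 2)) * A) i j = A i j := by
        intro i hi j
        rw [Matrix.add_mul, Matrix.one_mul, Matrix.add_apply,
          Matrix.single_mul_apply_of_ne _ _ _ _ _ hi, add_zero]
      have e2 : ∀ j, ((1 + Matrix.single s r (1 : ZMod 2)) * A) s j = A s j + A r j := by
        intro j
        rw [Matrix.add_mul, Matrix.one_mul, Matrix.add_apply, Matrix.single_mul_apply_same, one_mul]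
      refine ⟨_, T_single hrs, e1, ?_, ?_⟩
      · intro j hj i
        by_cases hi : i = s
        · subst hi
          have : r ≠ j := fun h => hrP (h ▸ hj)
          rw [e2, hP j hj, hP j hj, if_neg this, add_zero]
        · rw [e1 i hi, hP j hj]
      · simp only [e2, add_mul, Finset.sum_add_distrib]
        have := zmod2_ne hr
        linear_combination h + this
    · exact ⟨1, T_one 1, by simp, by simpa using hP, by simpa using zmod2_ne h⟩
  set A1 := M1 * A with hA1
  -- second step
  set w : Fin n → ZMod 2 := fun t => if t ∈ S then A1 s t else 0 with hw
  have hM2 := T_mono (card_supp_le (S := S) (by intro i hi; simp [hw, hi]))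
    (T_row s w (by simp [hw, hsS]))
  set M2 := 1 + vecMulVec (Pi.single s 1) w with hM2d
  set A2 := M2 * A1 with hA2
  have hne : ∀ t ∈ S, t ≠ s := fun t ht h => hsS (h ▸ ht)
  have a2i : ∀ i, i ≠ s → ∀ j, A2 i j = A i j := by
    intro i hi j
    rw [hA2, hM2d, mul_apply_aux, h1i i hi]; simp [hi]
  have a2s : ∀ j, A2 s j = A1 s j + ∑ t ∈ S, A1 s t * A t j := by
    intro j
    rw [hA2, hM2d, mul_apply_aux]
    simp only [hw, Pi.single_eq_same, one_mul, ite_mul, zero_mul, Finset.sum_ite_mem,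
      Finset.univ_inter]
    congr 1
    apply Finset.sum_congr rfl
    intro t ht
    rw [h1i t (hne t ht)]
  have a2ss : A2 s s = 1 := by rw [a2s, h1s]
  have a2sS : ∀ j ∈ S, A2 s j = 0 := by
    intro j hj
    rw [a2s, Finset.sum_eq_single j]
    · simp [hS j hj j hj, zmod2_add]
    · intro t ht htj
      simp [hS j hj t ht, htj]
    · exact fun h => absurd hj h
  have a2sP : ∀ j ∈ P, A2 s j = 0 := by
    intro j hj
    have hsj : s ≠ j := fun h => hsP (h ▸ hj)
    rw [a2s, h1P j hj, if_neg hsj, Finset.sum_eq_zero, add_zero]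
    intro t ht
    have : t ≠ j := fun h => hSP t ht (h ▸ hj)
    simp [hP j hj t, this]
  -- third step
  set u : Fin n → ZMod 2 := fun t => if t ∈ S then A2 t s else 0 with hu
  have hM3 := T_mono (card_supp_le (S := S) (by intro i hi; simp [hu, hi]))
    (T_col s u (by simp [hu, hsS]))
  set M3 := 1 + vecMulVec u (Pi.single s 1) with hM3d
  have a3 : ∀ i j, (M3 * A2) i j = A2 i j + u i * A2 s j := by
    intro i j
    rw [hM3d, mul_apply_aux, Finset.sum_eq_single s]
    · simp
    · intro k _ hk; simp [hk]
    · simp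
  have hus : u s = 0 := by simp [hu, hsS]
  refine ⟨M3 * M2 * M1, T_mono (by omega) (T_mul (T_mul hM3 hM2) hM1), ?_, ?_⟩
  · rw [Matrix.mul_assoc, Matrix.mul_assoc, ← hA1, ← hA2]
    intro j hj i
    rw [a3, a2sP j hj, mul_zero, add_zero]
    by_cases hi : i = s
    · subst hi
      have hsj : i ≠ j := fun h => hsP (h ▸ hj)
      rw [a2sP j hj, if_neg hsj]
    · rw [a2i i hi, hP j hj]
  · rw [Matrix.mul_assoc, Matrix.mul_assoc, ← hA1, ← hA2]
    intro j hj i hi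
    rw [a3]
    rcases Finset.mem_insert.1 hj with hj' | hj'
    · subst hj'
      rw [a2ss, mul_one]
      rcases Finset.mem_insert.1 hi with hi' | hi'
      · subst hi'
        simp [a2ss, hus]
      · simp [hu, hi', hne i hi', zmod2_add]
    · rw [a2sS j hj', mul_zero, add_zero]
      rcases Finset.mem_insert.1 hi with hi' | hi'
      · rw [hi', a2sS j hj', if_neg (Ne.symm (hne j hj'))]
      · rw [a2i i (hne i hi'), hS j hj' i hi']

theorem T_isUnit {k : ℕ} {M : Matrix (Fin n) (Fin n) (ZMod 2)} (h : T k M) : IsUnit M := by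
  obtain ⟨N, _, h1, h2⟩ := T_inv h
  exact ⟨⟨M, N, h2, h1⟩, rfl⟩

theorem block (m : ℕ) (A : Matrix (Fin n) (Fin n) (ZMod 2)) (hA : IsUnit A)
    (P S : Finset (Fin n)) (hPS : Disjoint P S) (hP : Std P A) (hm : S.card ≤ m) :
    ∃ M, T (S.card * (2 * m + 1)) M ∧ Std P (M * A) ∧ Blk S (M * A) := by
  induction S using Finset.induction_on with
  | empty => exact ⟨1, T_one _, by simpa using hP, by intro j hj; simp at hj⟩
  | insert a S ha ih =>
    rw [Finset.disjoint_insert_right] at hPS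
    rw [Finset.card_insert_of_notMem ha] at hm
    obtain ⟨M, hM, h1, h2⟩ := ih hPS.2 (by omega)
    obtain ⟨M', hM', h1', h2'⟩ := block_step (M * A) ((T_isUnit hM).mul hA) P S hPS.2 h1 h2 a
      hPS.1 ha
    refine ⟨M' * M, T_mono ?_ (T_mul hM' hM), by rwa [Matrix.mul_assoc], by rwa [Matrix.mul_assoc]⟩
    rw [Finset.card_insert_of_notMem ha, add_mul]
    omega

theorem section_step (m : ℕ) (A : Matrix (Fin n) (Fin n) (ZMod 2)) (hA : IsUnit A)
    (P S : Finset (Fin n)) (hPS : Disjoint P S) (hP : Std P A) (hm : S.card ≤ m) :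
    ∃ M, T (m * (2 * m + 1) + n + 2 * m * 2 ^ m) M ∧ Std (P ∪ S) (M * A) := by
  obtain ⟨M, hM, h1, h2⟩ := block m A hA P S hPS hP hm
  set B := M * A with hB
  set V : Matrix (Fin n) (Fin n) (ZMod 2) :=
    Matrix.of (fun i j => if i ∉ S ∧ j ∈ S then B i j else 0) with hV
  have hT := T_clear S V (by
    intro i j h
    by_contra h'
    exact h (by simp only [hV, Matrix.of_apply, if_neg h']))
  refine ⟨(1 + V) * M, T_mono ?_ (T_mul hT hM), ?_⟩
  · have e1 : S.card * (2 * m + 1) ≤ m * (2 * m + 1) := Nat.mul_le_mul_right _ hm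
    have e2 : 2 * S.card * 2 ^ S.card ≤ 2 * m * 2 ^ m :=
      Nat.mul_le_mul (by omega) (Nat.pow_le_pow_right (by norm_num) hm)
    omega
  · rw [Matrix.mul_assoc, ← hB]
    have e : ∀ i j, ((1 + V) * B) i j = B i j + ∑ k ∈ S, V i k * B k j := by
      intro i j
      rw [Matrix.add_mul, Matrix.one_mul, Matrix.add_apply, Matrix.mul_apply]
      congr 1
      symm
      apply Finset.sum_subset (Finset.subset_univ _)
      intro k _ hk
      simp [hV, hk]
    intro j hj i
    rw [e]
    rcases Finset.mem_union.1 hj with hj | hj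
    · rw [Finset.sum_eq_zero, add_zero, h1 j hj]
      intro k hk
      have : k ≠ j := by rintro rfl; exact Finset.disjoint_left.1 hPS hj hk
      simp [h1 j hj k, this]
    · rw [Finset.sum_eq_single j]
      · rw [h2 j hj j hj]
        by_cases hi : i ∈ S
        · simp [hV, hi, h2 j hj i hi]
        · have : i ≠ j := fun h => hi (h ▸ hj)
          simp [hV, hi, hj, zmod2_add, this]
      · intro k hk hkj
        simp [h2 j hj k hk, hkj]
      · exact fun h => absurd hj h

theorem full (m k : ℕ) (A : Matrix (Fin n) (Fin n) (ZMod 2)) (hA : IsUnit A)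
    (P : Finset (Fin n)) (hP : Std P A) (hk : Pᶜ.card ≤ k * m) :
    ∃ M, T (k * (m * (2 * m + 1) + n + 2 * m * 2 ^ m)) M ∧ M * A = 1 := by
  induction k generalizing A P with
  | zero =>
    have : P = univ := by
      rw [zero_mul, Nat.le_zero, Finset.card_eq_zero, Finset.compl_eq_empty_iff] at hk
      exact hk
    subst this
    refine ⟨1, T_one _, ?_⟩
    ext i j
    rw [Matrix.one_mul, hP j (by simp) i, Matrix.one_apply]
  | succ k ih =>
    obtain ⟨S, hS, hc⟩ := Finset.exists_subset_card_eq (s := Pᶜ) (n := min m Pᶜ.card)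
      (min_le_right _ _)
    have hPS : Disjoint P S := by
      rw [Finset.disjoint_left]
      intro i hi hi'
      exact Finset.mem_compl.1 (hS hi') hi
    obtain ⟨M, hM, h1⟩ := section_step m A hA P S hPS hP (by omega)
    obtain ⟨M', hM', h1'⟩ := ih (M * A) ((T_isUnit hM).mul hA) (P ∪ S) h1 (by
      have e1 := Finset.card_compl (P ∪ S)
      have e2 := Finset.card_compl P
      rw [Finset.card_union_of_disjoint hPS] at e1
      rw [add_mul, one_mul] at hk
      omega)
    refine ⟨M' * M, T_mono (by rw [add_mul, one_mul]) (T_mul hM' hM), by rwa [Matrix.mul_assoc]⟩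

end CNot

/-- Upper bound: there is a constant `C > 0` such that for every `n ≥ 2`, every
invertible `n × n` matrix over `𝔽₂` is a product of at most `C · n² / log₂ n`
transvections. -/
theorem exists_upper_bound_constant :
    ∃ C : ℝ, 0 < C ∧ ∀ n : ℕ, 2 ≤ n →
      ∀ A : Matrix (Fin n) (Fin n) (ZMod 2), IsUnit A →
        ∃ L : List (Matrix (Fin n) (Fin n) (ZMod 2)),
          (∀ B ∈ L, IsTransvection B) ∧ L.prod = A ∧
          (L.length : ℝ) ≤ C * (n : ℝ) ^ 2 / Real.logb 2 n := by
  refine ⟨32, by norm_num, ?_⟩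
  intro n hn A hA
  set l := Nat.log 2 n with hl
  set m := l / 2 + 1 with hm
  set q := 2 ^ (l / 2) with hq
  have hmq : m ≤ q := Nat.lt_two_pow_self
  have hqn : q * q ≤ n := by
    rw [hq, ← pow_add]
    exact (Nat.pow_le_pow_right (by norm_num) (by omega)).trans (Nat.pow_log_le_self 2 (by omega))
  have h2m : 2 ^ m = 2 * q := by rw [hm, hq, pow_succ, mul_comm]
  have hk : n ≤ (n / m + 1) * m := by
    have := Nat.lt_div_mul_add (a := n) (b := m) (by omega)
    rw [add_mul, one_mul]; omega
  obtain ⟨M, hM, hMA⟩ := CNot.full m (n / m + 1) A hA ∅ (by intro j hj; simp at hj)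
    (by simpa using hk)
  obtain ⟨N, ⟨L, h1, h2, h3⟩, e1, e2⟩ := CNot.T_inv hM
  have hNA : N = A := by
    calc N = N * (M * A) := by rw [hMA, mul_one]
      _ = A := by rw [← Matrix.mul_assoc, e1, one_mul]
  refine ⟨L, h1, h2.trans hNA, ?_⟩
  have hK : m * (2 * m + 1) + n + 2 * m * 2 ^ m ≤ 8 * n := by
    rw [h2m]
    have : m * m ≤ q * q := Nat.mul_le_mul hmq hmq
    have : m * q ≤ q * q := Nat.mul_le_mul_right _ hmq
    have : m ≤ m * m := Nat.le_mul_self m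
    nlinarith
  have hmn : m ≤ n := hmq.trans ((Nat.le_mul_self q).trans hqn)
  have hm1 : 1 ≤ m := by omega
  have hkm : (n / m + 1) * m ≤ 2 * n := by
    have := Nat.div_mul_le_self n m
    rw [add_mul, one_mul]; omega
  have hLm : L.length * m ≤ 16 * n ^ 2 := by
    calc L.length * m ≤ (n / m + 1) * (m * (2 * m + 1) + n + 2 * m * 2 ^ m) * m :=
          Nat.mul_le_mul_right _ h3
      _ ≤ (n / m + 1) * (8 * n) * m := by gcongr
      _ = (n / m + 1) * m * (8 * n) := by ring
      _ ≤ 2 * n * (8 * n) := by gcongr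
      _ = 16 * n ^ 2 := by ring
  have hn1 : (1 : ℝ) < n := by exact_mod_cast hn
  have hlogpos : 0 < Real.logb 2 n := Real.logb_pos (by norm_num) hn1
  have hlog : Real.logb 2 n ≤ 2 * m := by
    rw [Real.logb_le_iff_le_rpow (by norm_num) (by linarith)]
    have : n ≤ 2 ^ (2 * m) :=
      (Nat.lt_pow_succ_log_self (by norm_num) n).le.trans
        (Nat.pow_le_pow_right (by norm_num) (by omega))
    calc (n : ℝ) ≤ ((2 ^ (2 * m) : ℕ) : ℝ) := by exact_mod_cast this
      _ = (2 : ℝ) ^ (2 * (m : ℝ)) := by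
        rw [show (2 * (m : ℝ)) = ((2 * m : ℕ) : ℝ) by push_cast; ring, Real.rpow_natCast]
        push_cast; ring
  rw [le_div_iff₀ hlogpos]
  have hLm' : (L.length : ℝ) * m ≤ 16 * (n : ℝ) ^ 2 := by exact_mod_cast hLm
  have hL0 : (0 : ℝ) ≤ L.length := by positivity
  nlinarith [mul_le_mul_of_nonneg_left hlog hL0]
end

section
/- For every ε > 0 there exists N such that for all n ≥ N, every invertible n×n matrix over 𝔽₂ can be written as a product of at most (1 + ε) · n² / log₂ n transvections. -/
/-- row-operation reachability -/
def RReach {n : ℕ} (k : ℕ) (A B : Matrix (Fin n) (Fin n) (ZMod 2)) : Prop :=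
  ∃ L : List (Matrix (Fin n) (Fin n) (ZMod 2)),
    (∀ T ∈ L, IsTransvection T) ∧ L.length ≤ k ∧ B = L.prod * A

section
variable {n : ℕ} {A B C : Matrix (Fin n) (Fin n) (ZMod 2)}

lemma RReach.rfl' (A : Matrix (Fin n) (Fin n) (ZMod 2)) (k : ℕ) : RReach k A A :=
  ⟨[], by simp, by simp, by simp⟩

lemma RReach.trans {k l : ℕ} (h : RReach k A B) (h' : RReach l B C) : RReach (k + l) A C := by
  obtain ⟨L, h1, h2, h3⟩ := h
  obtain ⟨M, g1, g2, g3⟩ := h'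
  refine ⟨M ++ L, ?_, ?_, ?_⟩
  · intro T hT
    rcases List.mem_append.1 hT with h | h
    · exact g1 T h
    · exact h1 T h
  · simp; omega
  · rw [g3, h3, List.prod_append, mul_assoc]

lemma RReach.of_eq {k : ℕ} (h : RReach k A B) (e : ∀ a b, C a b = B a b) : RReach k A C := by
  have : C = B := by ext a b; exact e a b
  rwa [this]

lemma RReach.mono {k l : ℕ} (h : RReach k A B) (hkl : k ≤ l) : RReach l A B := by
  obtain ⟨L, h1, h2, h3⟩ := h
  exact ⟨L, h1, h2.trans hkl, h3⟩

lemma transv_mul_self {T : Matrix (Fin n) (Fin n) (ZMod 2)} (h : IsTransvection T) :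
    T * T = 1 := by
  obtain ⟨i, j, hij, rfl⟩ := h
  rw [Matrix.transvection_mul_transvection_same i j hij, show (1 : ZMod 2) + 1 = 0 from rfl,
    Matrix.transvection_zero]

lemma list_prod_rev (L : List (Matrix (Fin n) (Fin n) (ZMod 2)))
    (h : ∀ T ∈ L, IsTransvection T) : L.reverse.prod * L.prod = 1 := by
  induction L with
  | nil => simp
  | cons a L ih =>
    have ha := transv_mul_self (h a (by simp))
    have := ih (fun T hT => h T (by simp [hT]))
    rw [List.reverse_cons, List.prod_append, List.prod_singleton, List.prod_cons, mul_assoc,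
      ← mul_assoc a a, ha, one_mul, this]

lemma RReach.isUnit {k : ℕ} (h : RReach k A B) (hA : IsUnit A) : IsUnit B := by
  obtain ⟨L, h1, h2, h3⟩ := h
  rw [h3]
  refine IsUnit.mul ?_ hA
  exact IsUnit.of_mul_eq_one _ (mul_eq_one_comm.1 (list_prod_rev L h1))

lemma RReach.one (A : Matrix (Fin n) (Fin n) (ZMod 2)) (i j : Fin n) (hij : i ≠ j) :
    RReach 1 A (fun a b => A a b + if a = i then A j b else 0) := by
  refine ⟨[Matrix.transvection i j 1], ?_, by simp, ?_⟩
  · intro T hT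
    rw [List.mem_singleton] at hT
    exact ⟨i, j, hij, hT⟩
  · funext a b
    rw [List.prod_singleton]
    by_cases h : a = i
    · subst h
      simp
    · rw [Matrix.transvection_mul_apply_of_ne _ _ _ _ h]
      simp [h]

/-- add `∑_{j∈J} A_j` to row `s`. -/
lemma RReach.multi (A : Matrix (Fin n) (Fin n) (ZMod 2)) (s : Fin n) (J : Finset (Fin n))
    (hs : s ∉ J) :
    RReach J.card A (fun a b => A a b + if a = s then ∑ j ∈ J, A j b else 0) := by
  induction J using Finset.induction_on with
  | empty => simpa using RReach.rfl' A 0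
  | insert x J hx ih =>
    have hsx : s ≠ x := fun h => hs (by simp [h])
    have hsJ : s ∉ J := fun h => hs (by simp [h])
    rw [Finset.card_insert_of_notMem hx]
    have := (ih hsJ).trans (RReach.one _ s x hsx)
    refine this.of_eq fun a b => ?_
    beta_reduce
    rw [Finset.sum_insert hx]
    by_cases h : a = s
    · simp [h, hsx.symm]; ring
    · simp [h]

/-- add row `s` to all rows in `I`. -/
lemma RReach.multi' (A : Matrix (Fin n) (Fin n) (ZMod 2)) (s : Fin n) (I : Finset (Fin n))
    (hs : s ∉ I) :
    RReach I.card A (fun a b => A a b + if a ∈ I then A s b else 0) := by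
  induction I using Finset.induction_on with
  | empty => simpa using RReach.rfl' A 0
  | insert x J hx ih =>
    have hsx : s ≠ x := fun h => hs (by simp [h])
    have hsJ : s ∉ J := fun h => hs (by simp [h])
    rw [Finset.card_insert_of_notMem hx]
    have := (ih hsJ).trans (RReach.one _ x s hsx.symm)
    refine this.of_eq fun a b => ?_
    beta_reduce
    by_cases h : a = x
    · simp [h, hsJ, hx]
    · simp [h]

lemma RReach.block (A : Matrix (Fin n) (Fin n) (ZMod 2)) (S V I : Finset (Fin n))
    (hV : V ⊆ S) (hI : Disjoint I S) :
    RReach (2 * S.card + I.card) A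
      (fun a b => A a b + if a ∈ I then ∑ j ∈ V, A j b else 0) := by
  rcases V.eq_empty_or_nonempty with h | ⟨v, hv⟩
  · subst h
    simpa using RReach.rfl' A _
  have hIS : ∀ x, x ∈ I → x ∉ S := fun x hx => Finset.disjoint_left.1 hI hx
  have hvI : v ∉ I := fun h => hIS v h (hV hv)
  have e1 := RReach.multi A v (V.erase v) (by simp)
  have e2 := e1.trans (RReach.multi' _ v I hvI)
  have e3 := e2.trans (RReach.multi _ v (V.erase v) (by simp))
  have hc : (V.erase v).card ≤ S.card := Finset.card_le_card ((Finset.erase_subset _ _).trans hV)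
  have := e3.mono (show _ ≤ 2 * S.card + I.card by omega)
  refine this.of_eq fun a b => ?_
  beta_reduce
  have hsum : ∑ j ∈ V, A j b = A v b + ∑ j ∈ V.erase v, A j b :=
    (Finset.add_sum_erase _ _ hv).symm
  by_cases hav : a = v
  · subst hav
    simp only [hvI, if_true, if_false, add_zero]
    have : ∑ j ∈ V.erase a, ((A j b + if j = a then ∑ j ∈ V.erase a, A j b else 0) +
        if j ∈ I then (A a b + ∑ j ∈ V.erase a, A j b) else 0) = ∑ j ∈ V.erase a, A j b := by
      refine Finset.sum_congr rfl fun j hj => ?_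
      have h1 := Finset.ne_of_mem_erase hj
      have h2 : j ∉ I := fun h => hIS j h (hV (Finset.mem_of_mem_erase hj))
      simp [h1, h2]
    rw [this, add_assoc, CharTwo.add_self_eq_zero, add_zero]
  · simp [hav, hsum]

lemma RReach.russians (A : Matrix (Fin n) (Fin n) (ZMod 2)) (S : Finset (Fin n))
    (τ : Fin n → Finset (Fin n)) (F : Finset (Finset (Fin n))) (hF : ∀ V ∈ F, V ⊆ S) :
    RReach (∑ V ∈ F, (2 * S.card + (Sᶜ.filter (fun i => τ i = V)).card)) A
      (fun a b => A a b + if a ∉ S ∧ τ a ∈ F then ∑ j ∈ τ a, A j b else 0) := by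
  induction F using Finset.induction_on with
  | empty => simpa using RReach.rfl' A 0
  | insert V F hx ih =>
    rw [Finset.sum_insert hx, add_comm]
    have h1 := ih (fun W hW => hF W (by simp [hW]))
    have hVS := hF V (by simp)
    have h2 := h1.trans (RReach.block _ S V (Sᶜ.filter (fun i => τ i = V)) hVS (by
      rw [Finset.disjoint_left]; intro a ha; simp at ha; exact ha.1))
    refine h2.of_eq fun a b => ?_
    beta_reduce
    have : ∑ j ∈ V, (A j b + if j ∉ S ∧ τ j ∈ F then ∑ i ∈ τ j, A i b else 0)
        = ∑ j ∈ V, A j b := by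
      refine Finset.sum_congr rfl fun j hj => ?_
      simp [hVS hj]
    rw [this]
    by_cases ha : a ∈ S
    · simp [ha]
    · by_cases h : τ a = V
      · simp [ha, h, hx]
      · simp [ha, h]

/-- columns in `P` are the standard ones -/
def GoodCols (A : Matrix (Fin n) (Fin n) (ZMod 2)) (P : Finset (Fin n)) : Prop :=
  ∀ j ∈ P, ∀ i, A i j = if i = j then 1 else 0

lemma zmod2_cases (x : ZMod 2) : x = 0 ∨ x = 1 := by
  revert x; decide

lemma sum_filter_ne (S : Finset (Fin n)) (f g : Fin n → ZMod 2) :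
    ∑ j ∈ S.filter (fun j => f j ≠ 0), g j = ∑ j ∈ S, f j * g j := by
  rw [Finset.sum_filter]
  refine Finset.sum_congr rfl fun j _ => ?_
  rcases zmod2_cases (f j) with h | h <;> simp [h]

lemma clear_block (A : Matrix (Fin n) (Fin n) (ZMod 2)) (P S : Finset (Fin n))
    (hPS : Disjoint P S) (hP : GoodCols A P)
    (hS : ∀ i ∈ S, ∀ j ∈ S, A i j = if i = j then 1 else 0) :
    ∃ B, RReach (n + 2 * S.card * 2 ^ S.card) A B ∧ GoodCols B (P ∪ S) := by
  have key := RReach.russians A S (fun i => S.filter (fun j => A i j ≠ 0)) S.powerset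
    (fun V hV => Finset.mem_powerset.1 hV)
  refine ⟨_, key.mono ?_, ?_⟩
  · rw [Finset.sum_add_distrib, Finset.sum_const, Finset.card_powerset, smul_eq_mul]
    have : ∑ V ∈ S.powerset, (Sᶜ.filter (fun i => S.filter (fun j => A i j ≠ 0) = V)).card
        = (Sᶜ).card := by
      symm
      apply Finset.card_eq_sum_card_fiberwise
      intro i _
      exact Finset.mem_coe.2 (Finset.mem_powerset.2 (Finset.filter_subset _ _))
    rw [this]
    have h2 : (Sᶜ).card ≤ n := by simpa using Finset.card_le_univ (Sᶜ)
    nlinarith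
  · intro s hs i
    have hmem : S.filter (fun j => A i j ≠ 0) ∈ S.powerset := by simp
    simp only [hmem, and_true]
    rw [sum_filter_ne S (A i) (fun j => A j s)]
    rcases Finset.mem_union.1 hs with h | h
    · have : ∑ j ∈ S, A i j * A j s = 0 := by
        refine Finset.sum_eq_zero fun j hj => ?_
        have : j ≠ s := fun e => Finset.disjoint_left.1 hPS h (e ▸ hj)
        rw [hP s h j]; simp [this]
      rw [this, hP s h i]; simp
    · have : ∑ j ∈ S, A i j * A j s = A i s := by
        rw [Finset.sum_eq_single s]
        · rw [hS s h s h]; simp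
        · intro j hj hjs
          rw [hS j hj s h]; simp [hjs]
        · intro h'; exact absurd h h'
      rw [this]
      by_cases hi : i ∈ S
      · simp [hi, hS i hi s h]
      · have : i ≠ s := fun e => hi (e ▸ h)
        simp [hi, this, CharTwo.add_self_eq_zero]

lemma exists_row (A : Matrix (Fin n) (Fin n) (ZMod 2)) (hA : IsUnit A) (P S : Finset (Fin n))
    (s : Fin n) (hsP : s ∉ P) (hsS : s ∉ S)
    (hPS : Disjoint P S) (hP : GoodCols A P)
    (hS : ∀ i ∈ S, ∀ j ∈ S, A i j = if i = j then 1 else 0) :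
    ∃ r, r ∉ P ∧ r ∉ S ∧ A r s + ∑ j ∈ S, A r j * A j s = 1 := by
  by_contra hcon
  push Not at hcon
  set y : Fin n → ZMod 2 := fun r => A r s + ∑ j ∈ S, A r j * A j s with hy
  have hy0 : ∀ r, r ∉ P → y r = 0 := by
    intro r hr
    by_cases hrS : r ∈ S
    · have : ∑ j ∈ S, A r j * A j s = A r s := by
        rw [Finset.sum_eq_single r]
        · rw [hS r hrS r hrS]; simp
        · intro j hj hjs
          rw [hS r hrS j hj]; simp [hjs.symm]
        · intro h'; exact absurd hrS h'
      simp only [hy, this, CharTwo.add_self_eq_zero]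
    · rcases zmod2_cases (y r) with h | h
      · exact h
      · exact absurd h (hcon r hr hrS)
  let x : Fin n → ZMod 2 := fun k => (if k = s then 1 else 0) + (if k ∈ S then A k s else 0)
    + (if k ∈ P then y k else 0)
  have hx : A.mulVec x = 0 := by
    funext r
    simp only [Matrix.mulVec, dotProduct, x, mul_add, Finset.sum_add_distrib, Pi.zero_apply]
    have h3 : ∑ k, A r k * (if k ∈ P then y k else 0) = y r := by
      have : ∀ k, A r k * (if k ∈ P then y k else 0) = if r = k then y r else 0 := by
        intro k
        by_cases hk : k ∈ P
        · rw [hP k hk r]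
          by_cases h : r = k
          · subst h; simp [hk]
          · simp [h]
        · by_cases h : r = k
          · subst h; simp [hk, hy0 r hk]
          · simp [h, hk]
      simp [this]
    rw [h3]
    have h2 : ∑ k, A r k * (if k ∈ S then A k s else 0) = ∑ j ∈ S, A r j * A j s := by
      simp
    have h1 : ∑ k, A r k * (if k = s then 1 else 0) = A r s := by simp
    rw [h1, h2]
    exact CharTwo.add_self_eq_zero _
  have hx0 : x = 0 := by
    have := Matrix.mulVec_injective_of_isUnit hA
    exact this (by rw [hx, Matrix.mulVec_zero])
  have := congrFun hx0 s
  simp [x, hsP, hsS] at this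

lemma pivot_block (A : Matrix (Fin n) (Fin n) (ZMod 2)) (hA : IsUnit A) (P S : Finset (Fin n))
    (hPS : Disjoint P S) (hP : GoodCols A P) :
    ∃ B, RReach (S.card * (2 * S.card + 1)) A B ∧ GoodCols B P ∧
      ∀ i ∈ S, ∀ j ∈ S, B i j = if i = j then 1 else 0 := by
  induction S using Finset.induction_on with
  | empty => exact ⟨A, RReach.rfl' A _, hP, by simp⟩
  | insert s S hsS ih =>
    have hsP : s ∉ P := fun h => Finset.disjoint_left.1 hPS h (by simp)
    have hPS' : Disjoint P S := hPS.mono_right (by simp)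
    obtain ⟨B, hAB, hB, hBS⟩ := ih hPS'
    have hSP : ∀ j ∈ S, j ∉ P := fun j hj h => Finset.disjoint_left.1 hPS' h hj
    have hBu := hAB.isUnit hA
    -- step 1
    obtain ⟨C, hBC, hC, hCS, hCs⟩ : ∃ C, RReach 1 B C ∧ GoodCols C P ∧
        (∀ i ∈ S, ∀ j ∈ S, C i j = if i = j then 1 else 0) ∧
        C s s + ∑ j ∈ S, C s j * C j s = 1 := by
      rcases zmod2_cases (B s s + ∑ j ∈ S, B s j * B j s) with h0 | h1
      · obtain ⟨r, hrP, hrS, hr⟩ := exists_row B hBu P S s hsP hsS hPS' hB hBS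
        have hsr : s ≠ r := by
          rintro rfl
          rw [h0] at hr
          exact absurd hr (by decide)
        refine ⟨_, RReach.one B s r hsr, ?_, ?_, ?_⟩
        · intro j hj i
          have : r ≠ j := fun e => hrP (e ▸ hj)
          simp [hB j hj, this]
        · intro i hi j hj
          have : i ≠ s := fun e => hsS (e ▸ hi)
          simp [this, hBS i hi j hj]
        · have : ∑ j ∈ S, (B s j + if s = s then B r j else 0) *
              (B j s + if j = s then B r s else 0) =
              ∑ j ∈ S, B s j * B j s + ∑ j ∈ S, B r j * B j s := by
            rw [← Finset.sum_add_distrib]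
            refine Finset.sum_congr rfl fun j hj => ?_
            have : j ≠ s := fun e => hsS (e ▸ hj)
            simp [this]; ring
          rw [this]
          simp only [if_true]
          linear_combination h0 + hr
      · exact ⟨B, RReach.rfl' B 1, hB, hBS, h1⟩
    -- step 2
    obtain ⟨D, hCD, hD, hDS, hDs, hDss⟩ : ∃ D, RReach S.card C D ∧ GoodCols D P ∧
        (∀ i ∈ S, ∀ j ∈ S, D i j = if i = j then 1 else 0) ∧
        (∀ j ∈ S, D s j = 0) ∧ D s s = 1 := by
      have h1 := RReach.multi C s (S.filter (fun j => C s j ≠ 0)) (by simp [hsS])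
      refine ⟨_, h1.mono (Finset.card_filter_le _ _), ?_, ?_, ?_, ?_⟩
      · intro p hp i
        have : ∑ j ∈ S.filter (fun j => C s j ≠ 0), C j p = 0 := by
          refine Finset.sum_eq_zero fun j hj => ?_
          have hj' := (Finset.mem_filter.1 hj).1
          have : j ≠ p := fun e => hSP j hj' (e ▸ hp)
          rw [hC p hp j]; simp [this]
        simp only [this, hC p hp i]; simp
      · intro i hi j hj
        have : i ≠ s := fun e => hsS (e ▸ hi)
        simp [this, hCS i hi j hj]
      · intro k hk
        simp only [if_true]
        rw [sum_filter_ne S (C s) (fun j => C j k), Finset.sum_eq_single k]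
        · rw [hCS k hk k hk]; simp [CharTwo.add_self_eq_zero]
        · intro j hj hjs
          rw [hCS j hj k hk]; simp [hjs]
        · intro h'; exact absurd hk h'
      · simp only [if_true]
        rw [sum_filter_ne S (C s) (fun j => C j s), hCs]
    -- step 3
    have h3 := RReach.multi' D s (S.filter (fun i => D i s ≠ 0)) (by simp [hsS])
    have h4 := h3.mono (Finset.card_filter_le S (fun i => D i s ≠ 0))
    refine ⟨_, (((hAB.trans hBC).trans hCD).trans h4).mono ?_, ?_, ?_⟩
    · rw [Finset.card_insert_of_notMem hsS]
      nlinarith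
    · intro p hp i
      have : s ≠ p := fun e => hsP (e ▸ hp)
      simp [hD p hp, this]
    · intro i hi j hj
      rcases Finset.mem_insert.1 hi with rfl | hi'
      · rcases Finset.mem_insert.1 hj with rfl | hj
        · simp [hsS, hDss]
        · have : i ≠ j := fun e => hsS (e ▸ hj)
          simp [hsS, hDs j hj, this]
      · have hne : i ≠ s := fun e => hsS (e ▸ hi')
        rcases Finset.mem_insert.1 hj with rfl | hj
        · rcases zmod2_cases (D i j) with h | h
          · simp [h, hne]
          · simp [h, hne, hi', hDss, CharTwo.add_self_eq_zero]
        · simp [hDs j hj, hDS i hi' j hj]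

lemma block_step (A : Matrix (Fin n) (Fin n) (ZMod 2)) (hA : IsUnit A) (P S : Finset (Fin n))
    (hPS : Disjoint P S) (hP : GoodCols A P) (m : ℕ) (hm : S.card ≤ m) :
    ∃ B, RReach (m * (2 * m + 1) + (n + 2 * m * 2 ^ m)) A B ∧ GoodCols B (P ∪ S) := by
  obtain ⟨B, h1, h2, h3⟩ := pivot_block A hA P S hPS hP
  obtain ⟨C, h4, h5⟩ := clear_block B P S hPS h2 h3
  refine ⟨C, (h1.trans h4).mono ?_, h5⟩
  gcongr
  norm_num

lemma all_blocks (A : Matrix (Fin n) (Fin n) (ZMod 2)) (hA : IsUnit A) (m q : ℕ) :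
    ∀ U : Finset (Fin n), U.card ≤ q * m →
    ∃ B, RReach (q * (m * (2 * m + 1) + (n + 2 * m * 2 ^ m))) A B ∧ GoodCols B U := by
  induction q with
  | zero =>
    intro U hU
    have : U = ∅ := by simpa using hU
    subst this
    exact ⟨A, RReach.rfl' A _, by intro j hj; simp at hj⟩
  | succ q ih =>
    intro U hU
    obtain ⟨P, hPU, hPc⟩ := Finset.exists_subset_card_eq (s := U) (n := min U.card (q * m))
      (by simp)
    obtain ⟨B, h1, h2⟩ := ih P (by omega)
    have hc : (U \ P).card ≤ m := by
      rw [Finset.card_sdiff_of_subset hPU, hPc]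
      rw [add_mul] at hU
      omega
    obtain ⟨C, h3, h4⟩ := block_step B (h1.isUnit hA) P (U \ P) Finset.disjoint_sdiff h2 m hc
    refine ⟨C, (h1.trans h3).mono (le_of_eq (by ring)), ?_⟩
    rwa [Finset.union_sdiff_of_subset hPU] at h4

lemma exists_list (A : Matrix (Fin n) (Fin n) (ZMod 2)) (hA : IsUnit A) (m : ℕ) (hm : 0 < m) :
    ∃ L : List (Matrix (Fin n) (Fin n) (ZMod 2)),
      (∀ B ∈ L, IsTransvection B) ∧ L.prod = A ∧
      L.length ≤ (n / m + 1) * (m * (2 * m + 1) + (n + 2 * m * 2 ^ m)) := by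
  obtain ⟨B, ⟨L, h1, h2, h3⟩, h4⟩ := all_blocks A hA m (n / m + 1) Finset.univ (by
    rw [Finset.card_univ, Fintype.card_fin]
    have := Nat.div_add_mod n m
    have := Nat.mod_lt n hm
    nlinarith)
  have hB : B = 1 := by
    ext i j
    rw [h4 j (Finset.mem_univ j) i, Matrix.one_apply]
  refine ⟨L.reverse, by simpa using h1, ?_, by simpa using h2⟩
  have := list_prod_rev L h1
  calc L.reverse.prod = L.reverse.prod * (L.prod * A) := by rw [← h3, hB, mul_one]
    _ = A := by rw [← mul_assoc, this, one_mul]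
end

open Filter Topology in
lemma asymptotic_bound (ε : ℝ) (hε : 0 < ε) :
    ∃ N : ℕ, ∀ n : ℕ, N ≤ n → ∃ m : ℕ, 0 < m ∧
      (((n / m + 1) * (m * (2 * m + 1) + (n + 2 * m * 2 ^ m)) : ℕ) : ℝ) ≤
        (1 + ε) * (n : ℝ) ^ 2 / Real.logb 2 n := by
  set α : ℝ := (1 + ε / 2)⁻¹ with hα
  have hα0 : 0 < α := by positivity
  have hα1 : α < 1 := inv_lt_one_of_one_lt₀ (by linarith)
  have hαinv : α⁻¹ = 1 + ε / 2 := by rw [hα, inv_inv]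
  let l : ℕ → ℝ := fun n => Real.logb 2 n
  have hl : Tendsto l atTop atTop :=
    (Real.tendsto_logb_atTop (by norm_num)).comp tendsto_natCast_atTop_atTop
  have hlog : ∀ r : ℝ, 0 < r → Tendsto (fun n : ℕ => l n * (n : ℝ) ^ (-r)) atTop (𝓝 0) := by
    intro r hr
    have h1 := (isLittleO_log_rpow_atTop hr).tendsto_div_nhds_zero
    have h2 := (h1.comp tendsto_natCast_atTop_atTop).const_mul (Real.log 2)⁻¹
    rw [mul_zero] at h2
    refine h2.congr fun n => ?_
    simp only [Function.comp, l, Real.logb]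
    rw [Real.rpow_neg (Nat.cast_nonneg n)]
    field_simp
  -- the comparison function
  have hT1 : Tendsto (fun n => l n / (α * l n - 1)) atTop (𝓝 (1 + ε / 2)) := by
    have h1 : Tendsto (fun n => (α - (l n)⁻¹)⁻¹) atTop (𝓝 (1 + ε / 2)) := by
      rw [← hαinv]
      have := (tendsto_const_nhds (x := α)).sub hl.inv_tendsto_atTop
      rw [sub_zero] at this
      exact this.inv₀ hα0.ne'
    refine h1.congr' ?_
    filter_upwards [hl.eventually_gt_atTop 0] with n hn
    have : α - (l n)⁻¹ = (α * l n - 1) / l n := by field_simp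
    rw [this, inv_div]
  have hT2 : Tendsto (fun n : ℕ => l n * (n : ℝ) ^ (-1 : ℝ)) atTop (𝓝 0) := hlog 1 one_pos
  have hT3 : Tendsto (fun n : ℕ => l n * (n : ℝ) ^ (-(1/2) : ℝ)) atTop (𝓝 0) :=
    hlog (1/2) (by norm_num)
  have hT4 : Tendsto (fun n : ℕ => l n * (n : ℝ) ^ (-(1 - α))) atTop (𝓝 0) :=
    hlog (1 - α) (by linarith)
  have hT : Tendsto (fun n : ℕ => (l n / (α * l n - 1) + l n * (n : ℝ) ^ (-1 : ℝ)) *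
      (2 * (l n * (n : ℝ) ^ (-(1/2) : ℝ)) ^ 2 + l n * (n : ℝ) ^ (-1 : ℝ) + 1 +
        2 * (l n * (n : ℝ) ^ (-(1 - α))))) atTop (𝓝 (1 + ε / 2)) := by
    have := (hT1.add hT2).mul (((((hT3.pow 2).const_mul 2).add hT2).add_const 1).add
      (hT4.const_mul 2))
    convert this using 2
    norm_num
  have hev := hT.eventually_le_const (show 1 + ε / 2 < 1 + ε by linarith)
  have hfin := (hev.and (hl.eventually_gt_atTop (α⁻¹ * 2))).and (eventually_gt_atTop 0)
  obtain ⟨N, hN⟩ := eventually_atTop.1 hfin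
  refine ⟨N, fun n hn => ?_⟩
  obtain ⟨⟨h1, h2⟩, h3⟩ := hN n hn
  have hn0 : (0 : ℝ) < n := by exact_mod_cast h3
  have hl0 : 0 < l n := lt_trans (by positivity) h2
  have hal : 2 < α * l n := by
    have := mul_lt_mul_of_pos_left h2 hα0
    rwa [← mul_assoc, mul_inv_cancel₀ hα0.ne', one_mul] at this
  set m := ⌊α * l n⌋₊ with hm
  have hm1 : (m : ℝ) ≤ α * l n := Nat.floor_le (by linarith)
  have hm2 : α * l n - 1 < m := by
    have := Nat.lt_floor_add_one (α * l n); linarith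
  have hml : (m : ℝ) ≤ l n := by nlinarith
  have hm0 : (0 : ℝ) < m := by linarith
  have h2m : (2 : ℝ) ^ m ≤ (n : ℝ) ^ α := by
    have : (n : ℝ) ^ α = 2 ^ (α * l n) := by
      rw [mul_comm, Real.rpow_mul (by norm_num)]
      simp only [l]
      rw [Real.rpow_logb (by norm_num) (by norm_num) hn0]
    rw [this, ← Real.rpow_natCast]
    exact Real.rpow_le_rpow_of_exponent_le (by norm_num) hm1
  refine ⟨m, by exact_mod_cast hm0, ?_⟩
  rw [le_div_iff₀ hl0]
  push_cast
  have e1 : (n : ℝ) ^ (-1 : ℝ) = (n : ℝ)⁻¹ := Real.rpow_neg_one _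
  have e2 : ((n : ℝ) ^ (-(1/2) : ℝ)) ^ 2 = (n : ℝ)⁻¹ := by
    rw [← Real.rpow_natCast, ← Real.rpow_mul hn0.le, ← e1]; norm_num
  have e3 : (n : ℝ) ^ (-(1 - α)) = (n : ℝ) ^ α * (n : ℝ)⁻¹ := by
    rw [← e1, ← Real.rpow_add hn0]; ring_nf
  rw [mul_pow, e1, e2, e3] at h1
  have hq : ((n / m : ℕ) : ℝ) ≤ n / (α * l n - 1) := by
    refine Nat.cast_div_le.trans ?_
    have : 0 < α * l n - 1 := by linarith
    gcongr
  have hd : 0 < α * l n - 1 := by linarith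
  calc (((n / m : ℕ) : ℝ) + 1) * (m * (2 * m + 1) + (n + 2 * m * 2 ^ m)) * Real.logb 2 n
      ≤ (n / (α * l n - 1) + 1) * (l n * (2 * l n + 1) + (n + 2 * l n * (n : ℝ) ^ α)) * l n := by
        change _ * l n ≤ _
        gcongr
    _ = ((l n / (α * l n - 1) + l n * (n : ℝ)⁻¹) *
      (2 * (l n ^ 2 * (n : ℝ)⁻¹) + l n * (n : ℝ)⁻¹ + 1 +
        2 * (l n * ((n : ℝ) ^ α * (n : ℝ)⁻¹)))) * (n : ℝ) ^ 2 := by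
        generalize α * l n - 1 = d at *
        field_simp
        ring
    _ ≤ _ := by gcongr

/-- For every `ε > 0`, for all sufficiently large `n`, every invertible `n × n`
matrix over `𝔽₂` is a product of at most `(1 + ε) · n² / log₂ n`
transvections. -/
theorem upper_bound_constant_one (ε : ℝ) (hε : 0 < ε) :
    ∃ N : ℕ, ∀ n : ℕ, N ≤ n →
      ∀ A : Matrix (Fin n) (Fin n) (ZMod 2), IsUnit A →
        ∃ L : List (Matrix (Fin n) (Fin n) (ZMod 2)),
          (∀ B ∈ L, IsTransvection B) ∧ L.prod = A ∧
          (L.length : ℝ) ≤ (1 + ε) * (n : ℝ) ^ 2 / Real.logb 2 n := by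
  obtain ⟨N, hN⟩ := asymptotic_bound ε hε
  refine ⟨N, fun n hn A hA => ?_⟩
  obtain ⟨m, hm, hb⟩ := hN n hn
  obtain ⟨L, h1, h2, h3⟩ := exists_list A hA m hm
  exact ⟨L, h1, h2, le_trans (by exact_mod_cast h3) hb⟩
end

section
/- There exist constants c₁, c₂ > 0 such that for every n ≥ 2: (i) every invertible n×n matrix over 𝔽₂ can be written as a product of at most c₂ · n² / log₂ n transvections, and (ii) there exists an invertible n×n matrix over 𝔽₂ such that every list of transvections whose product equals it has length at least c₁ · n² / log₂ n. -/
abbrev Mx (n : ℕ) := Matrix (Fin n) (Fin n) (ZMod 2)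

def Cost {n : ℕ} (A : Mx n) (c : ℕ) : Prop :=
  ∃ L : List (Mx n), (∀ B ∈ L, IsTransvection B) ∧ L.prod = A ∧ L.length ≤ c

lemma cost_one {n : ℕ} : Cost (1 : Mx n) 0 := ⟨[], by simp, by simp, by simp⟩

lemma cost_mono {n : ℕ} {A : Mx n} {c d : ℕ} (h : Cost A c) (hcd : c ≤ d) : Cost A d := by
  obtain ⟨L, h1, h2, h3⟩ := h
  exact ⟨L, h1, h2, h3.trans hcd⟩

lemma cost_mul {n : ℕ} {A B : Mx n} {c d : ℕ} (hA : Cost A c) (hB : Cost B d) :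
    Cost (A * B) (c + d) := by
  obtain ⟨L, h1, h2, h3⟩ := hA
  obtain ⟨K, k1, k2, k3⟩ := hB
  refine ⟨L ++ K, ?_, by simp [h2, k2], by simp; omega⟩
  intro X hX
  rcases List.mem_append.1 hX with h | h
  · exact h1 _ h
  · exact k1 _ h

lemma z2 (x : ZMod 2) (h : x ≠ 0) : x = 1 := by
  revert x; decide

lemma zadd (x : ZMod 2) : x + x = 0 := by
  revert x; decide

lemma madd {n : ℕ} (A : Mx n) : A + A = 0 := by
  ext i j; simp [zadd]

lemma cost_pairs {n : ℕ} (Q : Finset (Fin n)) (W : Finset (Fin n × Fin n))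
    (h : ∀ p ∈ W, p.1 ∈ Q ∧ p.2 ∉ Q) :
    Cost (1 + ∑ p ∈ W, Matrix.single p.1 p.2 (1 : ZMod 2)) W.card := by
  induction W using Finset.induction_on with
  | empty => simpa using cost_one
  | insert p W hp ih =>
    have ih := ih (fun q hq => h q (Finset.mem_insert_of_mem hq))
    have hpQ := h p (Finset.mem_insert_self _ _)
    have ht : Cost (1 + Matrix.single p.1 p.2 (1 : ZMod 2)) 1 := by
      refine ⟨[Matrix.transvection p.1 p.2 1], ?_, by simp [Matrix.transvection], by simp⟩
      intro B hB
      refine ⟨p.1, p.2, fun he => hpQ.2 (he ▸ hpQ.1), by simpa using hB⟩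
    have := cost_mul ht ih
    rw [Finset.sum_insert hp, Finset.card_insert_of_notMem hp, add_comm W.card]
    convert this using 1
    have h0 : Matrix.single p.1 p.2 (1 : ZMod 2) * ∑ p ∈ W, Matrix.single p.1 p.2 (1 : ZMod 2) = 0 := by
      rw [Finset.mul_sum]
      apply Finset.sum_eq_zero
      intro q hq
      apply Matrix.single_mul_single_of_ne
      intro he
      exact hpQ.2 (he ▸ (h q (Finset.mem_insert_of_mem hq)).1)
    rw [add_mul, one_mul, mul_add, mul_one, h0]
    abel

lemma cost_N {n : ℕ} (Q : Finset (Fin n)) (N : Mx n) 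
    (h : ∀ i j, N i j ≠ 0 → i ∈ Q ∧ j ∉ Q) (W : Finset (Fin n × Fin n))
    (hW : ∀ i j, N i j ≠ 0 → (i, j) ∈ W) :
    Cost (1 + N) W.card := by
  have h1 := cost_pairs Q (W.filter (fun p => N p.1 p.2 ≠ 0)) (by
    intro p hp
    exact h _ _ (Finset.mem_filter.1 hp).2)
  refine cost_mono (c := (W.filter (fun p => N p.1 p.2 ≠ 0)).card) ?_ (Finset.card_filter_le _ _)
  convert h1 using 2
  ext i j
  rw [Matrix.sum_apply]
  by_cases hN : N i j = 0
  · rw [hN, Finset.sum_eq_zero]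
    intro p hp
    rw [Matrix.single_apply, if_neg]
    rintro ⟨rfl, rfl⟩
    exact (Finset.mem_filter.1 hp).2 hN
  · rw [Finset.sum_eq_single (i, j)]
    · simp [z2 _ hN]
    · intro p hp hne
      rw [Matrix.single_apply, if_neg]
      rintro ⟨rfl, rfl⟩
      exact hne rfl
    · intro hh
      exact absurd (Finset.mem_filter.2 ⟨hW i j hN, hN⟩) hh

lemma mul_zero_of {n : ℕ} (M N : Mx n) (h : ∀ i j k, M i j ≠ 0 → N j k ≠ 0 → False) : M * N = 0 := by
  ext i k
  rw [Matrix.mul_apply]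
  apply Finset.sum_eq_zero
  intro j _
  by_contra hc
  rw [mul_eq_zero, not_or] at hc
  exact h i j k hc.1 hc.2

lemma cost_conj {n m : ℕ} (S : Finset (Fin n)) (hS : S.card ≤ m) (N : Mx n)
    (h : ∀ i j, N i j ≠ 0 → i ∉ S ∧ j ∈ S) : Cost (1 + N) (2 * n + m * 2 ^ m) := by
  classical
  obtain ⟨f, hf1, hf2⟩ : ∃ f : Fin n → Fin n, (∀ i, N (f i) = N i) ∧ ∀ i j, N i = N j → f i = f j := by
    refine ⟨fun i => @Function.invFun _ _ ⟨i⟩ (fun i => N i) (N i), ?_, ?_⟩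
    · intro i
      exact @Function.invFun_eq _ _ ⟨i⟩ (fun i => N i) _ ⟨i, rfl⟩
    · intro i j hij
      simp only [hij]
  have hff : ∀ i, f (f i) = f i := fun i => hf2 _ _ (hf1 i)
  have hrow : ∀ i, N i ≠ 0 → i ∉ S := by
    intro i hi
    obtain ⟨j, hj⟩ := Function.ne_iff.1 hi
    exact (h i j hj).1
  let Q : Finset (Fin n) := Finset.univ.filter (fun i => N i ≠ 0 ∧ f i ≠ i)
  have hQ : ∀ i, i ∈ Q ↔ N i ≠ 0 ∧ f i ≠ i := by simp [Q]
  let E : Mx n := fun i j => if i ∈ Q ∧ j = f i then 1 else 0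
  have hE : ∀ i j, E i j ≠ 0 → i ∈ Q ∧ j = f i := by
    intro i j hij
    by_contra hc
    exact hij (if_neg hc)
  have hfQ : ∀ i, f i ∉ Q := by
    intro i hi
    exact ((hQ _).1 hi).2 (hff i)
  have hEE : E * E = 0 := by
    apply mul_zero_of
    intro i j k h1 h2
    have := (hE _ _ h1).2
    exact hfQ i (this ▸ (hE _ _ h2).1)
  have hNE : N * E = 0 := by
    apply mul_zero_of
    intro i j k h1 h2
    exact hrow j ((hQ _).1 (hE _ _ h2).1).1 (h _ _ h1).2
  have cE : Cost (1 + E) n := by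
    have := cost_N Q E (fun i j hij => ⟨(hE i j hij).1, (hE i j hij).2 ▸ hfQ i⟩)
      (Finset.univ.image (fun i => (i, f i))) (by
        intro i j hij
        rw [(hE i j hij).2]
        exact Finset.mem_image_of_mem _ (Finset.mem_univ _))
    refine cost_mono this (Finset.card_image_le.trans (by simp))
  have hENi : ∀ i j, (E * N) i j = if i ∈ Q then N i j else 0 := by
    intro i j
    rw [Matrix.mul_apply]
    by_cases hi : i ∈ Q
    · rw [Finset.sum_eq_single (f i)]
      · simp [E, hi, hf1]
      · intro b _ hb
        simp [E, hb]
      · simp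
    · simp [E, hi]
  have hM : ∀ i j, (N + E * N) i j ≠ 0 → i ∉ Q ∧ N i j ≠ 0 := by
    intro i j hij
    rw [Matrix.add_apply, hENi] at hij
    by_cases hi : i ∈ Q
    · simp [hi, zadd] at hij
    · simpa [hi] using hij
  let R : Finset (Fin n) := Finset.univ.filter (fun i => N i ≠ 0 ∧ f i = i)
  have hR : R.card ≤ 2 ^ m := by
    refine le_trans ?_ (Nat.pow_le_pow_right (by norm_num) hS)
    rw [← Finset.card_powerset]
    apply Finset.card_le_card_of_injOn (fun i => S.filter (fun j => N i j ≠ 0))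
    · intro i _
      exact Finset.mem_coe.2 (Finset.mem_powerset.2 (Finset.filter_subset _ _))
    · intro i hi i' hi' he
      simp only [R, Finset.coe_filter, Finset.mem_univ, true_and, Set.mem_ofPred_eq] at hi hi'
      rw [← hi.2, ← hi'.2]
      apply hf2
      funext j
      have hj : j ∈ S.filter (fun j => N i j ≠ 0) ↔ j ∈ S.filter (fun j => N i' j ≠ 0) := by
        simp only at he; rw [he]
      rw [Finset.mem_filter, Finset.mem_filter] at hj
      by_cases h1 : N i j = 0
      · by_cases h2 : N i' j = 0
        · rw [h1, h2]
        · exact absurd h1 (hj.2 ⟨(h _ _ h2).2, h2⟩).2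
      · rw [z2 _ h1, z2 _ (hj.1 ⟨(h _ _ h1).2, h1⟩).2]
  have cM : Cost (1 + (N + E * N)) (m * 2 ^ m) := by
    have := cost_N Sᶜ (N + E * N) (by
      intro i j hij
      have := h _ _ (hM i j hij).2
      simpa using this) (R ×ˢ S) (by
      intro i j hij
      obtain ⟨h1, h2⟩ := hM i j hij
      have h3 : N i ≠ 0 := Function.ne_iff.2 ⟨j, h2⟩
      rw [hQ] at h1
      simp only [Finset.mem_product, R, Finset.mem_filter, Finset.mem_univ, true_and]
      exact ⟨⟨h3, by tauto⟩, (h _ _ h2).2⟩)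
    refine cost_mono this ?_
    rw [Finset.card_product, mul_comm]
    exact Nat.mul_le_mul hS hR
  have := cost_mul (cost_mul cE cM) cE
  have e : (1 + E) * (1 + (N + E * N)) * (1 + E) = 1 + N := by
    have e1 : (1 + E) * (1 + (N + E * N)) * (1 + E)
      = 1 + N + (E + E) + (E * N + E * N) + E * E + (E * E) * N + N * E + E * (N * E) + E * (N * E) + (E * E) * (N * E) := by
      noncomm_ring
    rw [e1, hEE, hNE, madd, madd]; simp
  rw [e] at this
  exact cost_mono this (by omega)

def Reach {n : ℕ} (c : ℕ) (A A' : Mx n) : Prop := IsUnit A' ∧ ∃ B, Cost B c ∧ A = B * A'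

lemma reach_trans {n : ℕ} {c d : ℕ} {A B C : Mx n} (h1 : Reach c A B) (h2 : Reach d B C) :
    Reach (c + d) A C := by
  obtain ⟨u1, X, hX, e1⟩ := h1
  obtain ⟨u2, Y, hY, e2⟩ := h2
  exact ⟨u2, X * Y, cost_mul hX hY, by rw [e1, e2, mul_assoc]⟩

lemma reach_mono {n : ℕ} {c d : ℕ} {A B : Mx n} (h1 : Reach c A B) (h : c ≤ d) : Reach d A B := by
  obtain ⟨u1, X, hX, e1⟩ := h1
  exact ⟨u1, X, cost_mono hX h, e1⟩

lemma reach_N {n : ℕ} {c : ℕ} {A N : Mx n} (hA : IsUnit A) (hN : N * N = 0) (hc : Cost (1 + N) c) :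
    Reach c A ((1 + N) * A) := by
  have e : (1 + N) * (1 + N) = 1 := by
    have : (1 + N) * (1 + N) = 1 + (N + N) + N * N := by noncomm_ring
    rw [this, hN, madd]; simp
  exact ⟨(IsUnit.of_mul_eq_one _ e).mul hA, 1 + N, hc, by rw [← mul_assoc, e, one_mul]⟩

def PInv {n : ℕ} (k l j : ℕ) (A : Mx n) : Prop :=
  (∀ i c : Fin n, c.val < k → A i c = (1 : Mx n) i c) ∧
  (∀ i c : Fin n, k ≤ i.val → i.val < l → k ≤ c.val → c.val < j → A i c = (1 : Mx n) i c)

def Sg (n k l : ℕ) : Finset (Fin n) := Finset.univ.filter (fun i => k ≤ i.val ∧ i.val < l)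

lemma mem_Sg {n k l : ℕ} (i : Fin n) : i ∈ Sg n k l ↔ k ≤ i.val ∧ i.val < l := by simp [Sg]

lemma card_Sg (n k l : ℕ) : (Sg n k l).card ≤ l - k := by
  rw [← Nat.card_Ico]
  apply Finset.card_le_card_of_injOn Fin.val
  · intro i hi
    have := (mem_Sg i).1 hi
    simpa using this
  · exact Fin.val_injective.injOn

lemma exists_r {n k l : ℕ} (A : Mx n) (hA : IsUnit A) (J : Fin n) (hk : k ≤ J.val)
    (h : PInv k l J.val A) : ∃ r : Fin n, k ≤ r.val ∧
      A r J + ∑ i, (if k ≤ i.val ∧ i.val < J.val then A r i * A i J else 0) ≠ 0 := by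
  by_contra hc
  push Not at hc
  let u : Fin n → ZMod 2 := fun i => if i = J then 1 else if k ≤ i.val ∧ i.val < J.val then A i J else 0
  have hu : ∀ r, (A.mulVec u) r = A r J + ∑ i, (if k ≤ i.val ∧ i.val < J.val then A r i * A i J else 0) := by
    intro r
    have : A r J = ∑ i, if i = J then A r i else 0 := by simp
    rw [this, ← Finset.sum_add_distrib]
    simp only [Matrix.mulVec, dotProduct]
    apply Finset.sum_congr rfl
    intro i _
    by_cases hi : i = J
    · subst hi; simp [u]
    · simp [u, hi]
  have hw : A.mulVec (A.mulVec u) = A.mulVec u := by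
    funext r
    conv_rhs => rw [← Matrix.one_mulVec (A.mulVec u)]
    simp only [Matrix.mulVec, dotProduct]
    apply Finset.sum_congr rfl
    intro c _
    by_cases hck : c.val < k
    · rw [h.1 r c hck]
    · have := hc c (by omega)
      rw [← hu] at this
      simp only [Matrix.mulVec, dotProduct] at this
      rw [this]; simp
  have hinj := Matrix.mulVec_injective_of_isUnit hA
  have h1 := hinj hw
  have h2 : (A.mulVec u) J = u J := by rw [h1]
  rw [hu, hc J hk] at h2
  simp [u] at h2

lemma pivot1 {n k l : ℕ} (A : Mx n) (hA : IsUnit A) (J : Fin n) (hk : k ≤ J.val) (hl : J.val < l)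
    (h : PInv k l J.val A) : ∃ A', Reach (l - k + 1) A A' ∧ PInv k l J.val A' ∧ A' J J = 1 := by
  by_cases hJ : A J J = 0
  swap
  · exact ⟨A, ⟨hA, 1, cost_mono cost_one (by omega), by simp⟩, h, z2 _ hJ⟩
  obtain ⟨r, hrk, hr⟩ := exists_r A hA J hk h
  have hrJ : r ≠ J := by
    rintro rfl
    apply hr
    rw [hJ, Finset.sum_eq_zero]; simp
    intro i _
    split_ifs with hi
    · rw [h.2 r i hk hl hi.1 hi.2, Matrix.one_apply_ne, zero_mul]
      rintro rfl; omega
    · rfl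
  let N : Mx n := fun i c => if i = J then (if c = r then 1 else 0) + (if k ≤ c.val ∧ c.val < J.val then A r c else 0) else 0
  have hN : ∀ i c, N i c ≠ 0 → i = J ∧ c ∈ insert r (Sg n k l) ∧ c ≠ J := by
    intro i c hic
    simp only [N] at hic
    by_cases hi : i = J
    · refine ⟨hi, ?_, ?_⟩
      · rw [Finset.mem_insert, mem_Sg]
        by_contra hcon
        apply hic
        push Not at hcon
        rw [if_pos hi, if_neg hcon.1, if_neg, add_zero]
        intro hh
        have := hcon.2 hh.1
        omega
      · rintro rfl
        apply hic
        rw [if_pos hi, if_neg (Ne.symm hrJ), if_neg, add_zero]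
        omega
    · simp [hi] at hic
  have hNA : ∀ i c, ((1 + N) * A) i c = A i c + if i = J then A r c + ∑ b, (if k ≤ b.val ∧ b.val < J.val then A r b * A b c else 0) else 0 := by
    intro i c
    rw [add_mul, one_mul, Matrix.add_apply, Matrix.mul_apply]
    congr 1
    by_cases hi : i = J
    · have e : A r c = ∑ b, if b = r then A b c else 0 := by simp
      rw [if_pos hi, e, ← Finset.sum_add_distrib]
      apply Finset.sum_congr rfl
      intro b _
      simp [N, hi, add_mul]
    · simp [N, hi]
  have key : ∀ c : Fin n, c.val < J.val → A r c + ∑ b, (if k ≤ b.val ∧ b.val < J.val then A r b * A b c else 0) = 0 := by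
    intro c hc
    by_cases hck : c.val < k
    · rw [h.1 r c hck, Matrix.one_apply_ne (by rintro rfl; omega), Finset.sum_eq_zero, add_zero]
      intro b _
      split_ifs with hb
      · rw [h.1 b c hck, Matrix.one_apply_ne (by rintro rfl; omega), mul_zero]
      · rfl
    · rw [Finset.sum_eq_single c]
      · rw [if_pos ⟨by omega, hc⟩, h.2 c c (by omega) (by omega) (by omega) hc]
        simp [zadd]
      · intro b _ hb
        split_ifs with hb'
        · rw [h.2 b c (by omega) (by omega) (by omega) hc, Matrix.one_apply_ne hb, mul_zero]
        · rfl
      · simp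
  refine ⟨(1 + N) * A, reach_N hA ?_ ?_, ⟨?_, ?_⟩, ?_⟩
  · apply mul_zero_of
    intro i j b h1 h2
    exact (hN _ _ h1).2.2 (hN _ _ h2).1
  · refine cost_mono (cost_N {J} N ?_ ({J} ×ˢ (insert r (Sg n k l))) ?_) ?_
    · intro i j hij
      have := hN i j hij
      simp [this.1, this.2.2]
    · intro i j hij
      have := hN i j hij
      rw [Finset.mem_product]
      exact ⟨by simp [this.1], this.2.1⟩
    · rw [Finset.card_product, Finset.card_singleton, one_mul]
      exact (Finset.card_insert_le _ _).trans (Nat.succ_le_succ (card_Sg n k l))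
  · intro i c hc
    rw [hNA, key c (by omega), h.1 i c hc]; simp
  · intro i c h1 h2 h3 h4
    rw [hNA, key c h4, h.2 i c h1 h2 h3 h4]; simp
  · rw [hNA, if_pos rfl, hJ, zero_add, z2 _ hr]

lemma pivot2 {n k l : ℕ} (A : Mx n) (hA : IsUnit A) (J : Fin n) (hk : k ≤ J.val) (hl : J.val < l)
    (h : PInv k l J.val A) (hJ : A J J = 1) : ∃ A', Reach (l - k) A A' ∧ PInv k l (J.val + 1) A' := by
  let N : Mx n := fun i c => if c = J ∧ i ∈ Sg n k l ∧ i ≠ J then A i J else 0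
  have hN : ∀ i c, N i c ≠ 0 → c = J ∧ i ∈ Sg n k l ∧ i ≠ J := by
    intro i c hic
    by_contra hc
    exact hic (if_neg hc)
  have hNA : ∀ i c, ((1 + N) * A) i c = A i c + if i ∈ Sg n k l ∧ i ≠ J then A i J * A J c else 0 := by
    intro i c
    rw [add_mul, one_mul, Matrix.add_apply, Matrix.mul_apply, Finset.sum_eq_single J]
    · simp [N]
    · intro b _ hb
      simp [N, hb]
    · simp
  have hz : ∀ c : Fin n, c.val < J.val → A J c = 0 := by
    intro c hc
    by_cases hck : c.val < k
    · rw [h.1 J c hck, Matrix.one_apply_ne (by rintro rfl; omega)]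
    · rw [h.2 J c hk hl (by omega) hc, Matrix.one_apply_ne (by rintro rfl; omega)]
  refine ⟨(1 + N) * A, reach_N hA ?_ ?_, ⟨?_, ?_⟩⟩
  · apply mul_zero_of
    intro i j b h1 h2
    exact (hN _ _ h2).2.2 (hN _ _ h1).1
  · refine cost_mono (cost_N {J}ᶜ N ?_ ((Sg n k l) ×ˢ {J}) ?_) ?_
    · intro i j hij
      have := hN i j hij
      simp [this.1, this.2.2]
    · intro i j hij
      have := hN i j hij
      rw [Finset.mem_product]
      exact ⟨this.2.1, by simp [this.1]⟩
    · rw [Finset.card_product, Finset.card_singleton, mul_one]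
      exact card_Sg n k l
  · intro i c hc
    rw [hNA, hz c (by omega), h.1 i c hc]; simp
  · intro i c h1 h2 h3 h4
    by_cases hcJ : c = J
    · subst hcJ
      rw [hNA, hJ]
      by_cases hi : i = c
      · subst hi; simp [hJ]
      · rw [if_pos ⟨(mem_Sg i).2 ⟨h1, h2⟩, hi⟩, Matrix.one_apply_ne hi, mul_one, zadd]
    · have : c.val < J.val := by
        have : c.val ≠ J.val := fun e => hcJ (Fin.ext e)
        omega
      rw [hNA, hz c this, h.2 i c h1 h2 h3 this]; simp

lemma pivots {n k l : ℕ} (hkl : k ≤ l) (hl : l ≤ n) (A : Mx n) (hA : IsUnit A) (h : PInv k l k A) (t : ℕ) (ht : k + t ≤ l) :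
    ∃ A', Reach (t * (2 * (l - k) + 1)) A A' ∧ PInv k l (k + t) A' := by
  induction t with
  | zero => exact ⟨A, ⟨hA, 1, cost_mono cost_one (by omega), by simp⟩, h⟩
  | succ t ih =>
    obtain ⟨A1, r1, i1⟩ := ih (by omega)
    obtain ⟨A2, r2, i2, e2⟩ := pivot1 A1 r1.1 ⟨k + t, by omega⟩ (by simp) (by simp; omega) i1
    obtain ⟨A3, r3, i3⟩ := pivot2 A2 r2.1 ⟨k + t, by omega⟩ (by simp) (by simp; omega) i2 e2
    refine ⟨A3, reach_mono (reach_trans (reach_trans r1 r2) r3) ?_, i3⟩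
    rw [add_mul]; omega

lemma clear {n k l m : ℕ} (hm : l - k ≤ m) (A : Mx n) (hA : IsUnit A) (h : PInv k l l A) :
    ∃ A', Reach (2 * n + m * 2 ^ m) A A' ∧ ∀ i c : Fin n, c.val < l → A' i c = (1 : Mx n) i c := by
  let N : Mx n := fun i c => if i ∉ Sg n k l ∧ c ∈ Sg n k l then A i c else 0
  have hN : ∀ i c, N i c ≠ 0 → i ∉ Sg n k l ∧ c ∈ Sg n k l := by
    intro i c hic
    by_contra hc
    exact hic (if_neg hc)
  refine ⟨(1 + N) * A, reach_N hA ?_ (cost_conj (Sg n k l) ((card_Sg n k l).trans hm) N hN), ?_⟩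
  · apply mul_zero_of
    intro i j b h1 h2
    exact (hN _ _ h2).1 (hN _ _ h1).2
  · intro i c hc
    rw [add_mul, one_mul, Matrix.add_apply, Matrix.mul_apply]
    by_cases hck : c.val < k
    · rw [h.1 i c hck, Finset.sum_eq_zero, add_zero]
      intro b _
      by_cases hb : b ∈ Sg n k l
      · rw [h.1 b c hck, Matrix.one_apply_ne, mul_zero]
        rintro rfl
        have := (mem_Sg b).1 hb
        omega
      · simp [N, hb]
    · by_cases hi : i ∈ Sg n k l
      · have hi' := (mem_Sg i).1 hi
        rw [h.2 i c hi'.1 hi'.2 (by omega) hc, Finset.sum_eq_zero, add_zero]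
        intro b _
        simp [N, hi]
      · have hcS : c ∈ Sg n k l := (mem_Sg c).2 ⟨by omega, hc⟩
        rw [Finset.sum_eq_single c]
        · rw [h.2 c c (by omega) hc (by omega) hc, Matrix.one_apply_ne (show i ≠ c by rintro rfl; exact hi hcS)]
          simp [N, hi, hcS, zadd]
        · intro b _ hb
          by_cases hbS : b ∈ Sg n k l
          · have hb' := (mem_Sg b).1 hbS
            rw [h.2 b c hb'.1 hb'.2 (by omega) hc, Matrix.one_apply_ne hb, mul_zero]
          · simp [N, hbS]
        · simp

lemma blocks {n m : ℕ} (A : Mx n) (hA : IsUnit A) (t : ℕ) :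
    ∃ A', Reach (t * (m * (2 * m + 1) + (2 * n + m * 2 ^ m))) A A' ∧
      ∀ i c : Fin n, c.val < min (t * m) n → A' i c = (1 : Mx n) i c := by
  induction t with
  | zero => exact ⟨A, ⟨hA, 1, cost_mono cost_one (by omega), by simp⟩, by simp⟩
  | succ t ih =>
    obtain ⟨A1, r1, i1⟩ := ih
    have hmm : (t + 1) * m = t * m + m := by ring
    rw [hmm]
    generalize hk : min (t * m) n = k at *
    generalize hl : min (t * m + m) n = l at *
    have hkl : k ≤ l := by omega
    have hd : l - k ≤ m := by omega
    obtain ⟨A2, r2, i2⟩ := pivots (l := l) hkl (by omega) A1 r1.1 ⟨i1, fun i c _ _ h3 h4 => by omega⟩ (l - k) (by omega)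
    rw [show k + (l - k) = l by omega] at i2
    obtain ⟨A3, r3, i3⟩ := clear hd A2 r2.1 i2
    refine ⟨A3, reach_mono (reach_trans (reach_trans r1 r2) r3) ?_, i3⟩
    have : (l - k) * (2 * (l - k) + 1) ≤ m * (2 * m + 1) := Nat.mul_le_mul hd (by omega)
    rw [add_mul t 1, one_mul]; omega

lemma upper {n : ℕ} (hn : 2 ≤ n) (A : Mx n) (hA : IsUnit A) :
    ∃ c : ℕ, Cost A c ∧ (c : ℝ) ≤ 72 * (n : ℝ) ^ 2 / Real.logb 2 n := by
  let m := Nat.log 2 n / 2 + 1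
  have hlog : 2 ^ Nat.log 2 n ≤ n := Nat.pow_log_le_self 2 (by omega)
  have hlog2 : n < 2 ^ (Nat.log 2 n + 1) := Nat.lt_pow_succ_log_self (by norm_num) n
  have hlogn : Nat.log 2 n < n := Nat.log_lt_self 2 (by omega)
  have h4 : 2 ^ m * 2 ^ m ≤ 4 * n := by
    rw [← pow_add]
    calc 2 ^ (m + m) ≤ 2 ^ (Nat.log 2 n + 2) := Nat.pow_le_pow_right (by norm_num) (by omega)
      _ ≤ 4 * n := by rw [pow_add]; omega
  have hm2 : m ≤ 2 ^ m := Nat.lt_two_pow_self.le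
  have hmpos : 1 ≤ m := by omega
  have hmn : m ≤ n := by omega
  have hW : m * (2 * m + 1) + (2 * n + m * 2 ^ m) ≤ 18 * n := by nlinarith
  obtain ⟨A', ⟨u, B, cB, e⟩, hA'⟩ := blocks (m := m) A hA (n / m + 1)
  have hcov : n ≤ (n / m + 1) * m := by
    have := Nat.lt_div_mul_add (a := n) (b := m) (by omega)
    rw [add_mul]; omega
  have h1 : A' = 1 := by
    ext i c
    exact hA' i c (by rw [min_eq_right hcov]; exact c.2)
  rw [h1, mul_one] at e
  subst e
  refine ⟨_, cB, ?_⟩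
  have hL : 0 < Real.logb 2 n := Real.logb_pos (by norm_num) (by exact_mod_cast (by omega : 1 < n))
  have hLm : Real.logb 2 n ≤ 2 * m := by
    rw [Real.logb_le_iff_le_rpow (by norm_num) (by exact_mod_cast (by omega : 0 < n))]
    have : n ≤ 2 ^ (2 * m) := hlog2.le.trans (Nat.pow_le_pow_right (by norm_num) (by omega))
    have h' : (n : ℝ) ≤ 2 ^ (2 * m) := by exact_mod_cast this
    refine h'.trans (le_of_eq ?_)
    rw [← Real.rpow_natCast]; push_cast; rfl
  rw [le_div_iff₀ hL]
  generalize m * (2 * m + 1) + (2 * n + m * 2 ^ m) = W at *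
  have ht : (n / m + 1) * m ≤ 2 * n := by
    have := Nat.div_mul_le_self n m
    rw [add_mul]; omega
  have ht' : (((n / m + 1 : ℕ) : ℝ)) * m ≤ 2 * n := by exact_mod_cast ht
  have hW' : (W : ℝ) ≤ 18 * n := by exact_mod_cast hW
  rw [Nat.cast_mul]
  have hT0 : (0 : ℝ) ≤ ((n / m + 1 : ℕ) : ℝ) := Nat.cast_nonneg _
  generalize ((n / m + 1 : ℕ) : ℝ) = T at *
  have hn0 : (0 : ℝ) ≤ n := Nat.cast_nonneg _
  calc T * W * Real.logb 2 n ≤ T * (18 * n) * (2 * m) := by gcongr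
    _ = 36 * n * (T * m) := by ring
    _ ≤ 36 * n * (2 * n) := by gcongr
    _ = 72 * (n : ℝ) ^ 2 := by ring

lemma list_fun {n : ℕ} (hn : 0 < n) (L : List (Mx n)) (hL : ∀ B ∈ L, IsTransvection B) :
    ∀ k, L.length ≤ k → ∃ f : Fin k → Fin n × Fin n,
    L.prod = (List.ofFn (fun a => if (f a).1 = (f a).2 then (1 : Mx n) else Matrix.transvection (f a).1 (f a).2 1)).prod := by
  induction L with
  | nil =>
    intro k _
    refine ⟨fun _ => (⟨0, hn⟩, ⟨0, hn⟩), ?_⟩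
    simp
  | cons B L ih =>
    intro k hk
    obtain ⟨k, rfl⟩ : ∃ k', k = k' + 1 := ⟨k - 1, by simp at hk; omega⟩
    obtain ⟨f, hf⟩ := ih (fun B hB => hL B (List.mem_cons_of_mem _ hB)) k (by simpa using hk)
    obtain ⟨i, j, hij, hB⟩ := hL B List.mem_cons_self
    refine ⟨Fin.cons (i, j) f, ?_⟩
    rw [List.prod_cons, hf, List.ofFn_succ, List.prod_cons]
    simp [hij, hB]

lemma lower {n : ℕ} (hn : 2 ≤ n) : ∃ A : Mx n, IsUnit A ∧
        ∀ L : List (Mx n), (∀ B ∈ L, IsTransvection B) → L.prod = A →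
            (1/4) * (n : ℝ) ^ 2 / Real.logb 2 n ≤ L.length := by
  by_contra hc
  push Not at hc
  have hL : 0 < Real.logb 2 n := Real.logb_pos (by norm_num) (by exact_mod_cast (by omega : 1 < n))
  have hpos : 0 < (1/4) * (n : ℝ) ^ 2 / Real.logb 2 n := by
    have : (0 : ℝ) < n := by exact_mod_cast (by omega : 0 < n)
    positivity
  -- k = ceil - 1
  obtain ⟨k, hk1, hk2⟩ : ∃ k : ℕ, (k : ℝ) < (1/4) * (n : ℝ) ^ 2 / Real.logb 2 n ∧
      ∀ l : ℕ, (l : ℝ) < (1/4) * (n : ℝ) ^ 2 / Real.logb 2 n → l ≤ k := by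
    have h0 : 0 < ⌈(1/4) * (n : ℝ) ^ 2 / Real.logb 2 n⌉₊ := Nat.ceil_pos.2 hpos
    refine ⟨⌈(1/4) * (n : ℝ) ^ 2 / Real.logb 2 n⌉₊ - 1, ?_, ?_⟩
    · apply Nat.lt_ceil.1; omega
    · intro l hl
      have := Nat.lt_ceil.2 hl
      omega
  let F : (Fin k → Fin n × Fin n) → Mx n := fun f =>
    (List.ofFn (fun a => if (f a).1 = (f a).2 then (1 : Mx n) else Matrix.transvection (f a).1 (f a).2 1)).prod
  have hsur : ∀ g : GL (Fin n) (ZMod 2), ∃ f, F f = g.val := by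
    intro g
    obtain ⟨L, h1, h2, h3⟩ := hc g.val g.isUnit
    obtain ⟨f, hf⟩ := list_fun (by omega) L h1 k (hk2 _ h3)
    exact ⟨f, by rw [← h2, hf]⟩
  choose φ hφ using hsur
  have hinj : Function.Injective φ := by
    intro a b hab
    apply Units.ext
    rw [← hφ a, ← hφ b, hab]
  have hcard := Nat.card_le_card_of_injective φ hinj
  rw [Matrix.card_GL_field] at hcard
  have hge : 2 ^ (n * (n - 1)) ≤ ∏ i : Fin n, (Fintype.card (ZMod 2) ^ n - Fintype.card (ZMod 2) ^ (i : ℕ)) := by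
    calc 2 ^ (n * (n - 1)) = ∏ i : Fin n, 2 ^ (n - 1) := by simp [← pow_mul, mul_comm]
      _ ≤ _ := by
        apply Finset.prod_le_prod'
        intro i _
        rw [ZMod.card]
        have h1 : 2 ^ i.val ≤ 2 ^ (n - 1) := Nat.pow_le_pow_right (by norm_num) (by omega)
        have h2 : 2 ^ n = 2 * 2 ^ (n - 1) := by
          rw [← pow_succ']; congr 1; omega
        omega
  have hfin := hge.trans hcard
  have hcf : Nat.card (Fin k → Fin n × Fin n) = n ^ (2 * k) := by
    simp [pow_mul, sq]
  rw [hcf] at hfin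
  have hR : (2 : ℝ) ^ (n * (n - 1)) ≤ (n : ℝ) ^ (2 * k) := by exact_mod_cast hfin
  have hlg := Real.logb_le_logb_of_le (b := 2) (by norm_num) (by positivity) hR
  rw [Real.logb_pow, Real.logb_pow, Real.logb_self_eq_one (by norm_num)] at hlg
  rw [lt_div_iff₀ hL] at hk1
  push_cast [Nat.cast_sub (by omega : 1 ≤ n)] at hlg
  have : (2 : ℝ) ≤ n := by exact_mod_cast hn
  nlinarith

/-- Theorem 1: the worst-case length of an `n`-wire C-NOT circuit is
`Θ(n²/log n)` gates. -/
theorem worst_case_cnot_length_theta :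
    ∃ c₁ c₂ : ℝ, 0 < c₁ ∧ 0 < c₂ ∧ ∀ n : ℕ, 2 ≤ n →
      ((∀ A : Matrix (Fin n) (Fin n) (ZMod 2), IsUnit A →
        ∃ L : List (Matrix (Fin n) (Fin n) (ZMod 2)),
          (∀ B ∈ L, IsTransvection B) ∧ L.prod = A ∧
          (L.length : ℝ) ≤ c₂ * (n : ℝ) ^ 2 / Real.logb 2 n) ∧
      (∃ A : Matrix (Fin n) (Fin n) (ZMod 2), IsUnit A ∧
        ∀ L : List (Matrix (Fin n) (Fin n) (ZMod 2)),
          (∀ B ∈ L, IsTransvection B) → L.prod = A →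
            c₁ * (n : ℝ) ^ 2 / Real.logb 2 n ≤ L.length)) := by
  refine ⟨1 / 4, 72, by norm_num, by norm_num, fun n hn => ⟨?_, lower hn⟩⟩
  intro A hA
  obtain ⟨c, ⟨L, h1, h2, h3⟩, hc⟩ := upper hn A hA
  exact ⟨L, h1, h2, le_trans (by exact_mod_cast h3) hc⟩
end

section
/- Let F be a finite field with q = |F| ≥ 2 elements. There exists a constant C > 0 (depending on F) such that for every n ≥ 2, every invertible n×n matrix over F can be written as a product of at most C · n² · (log q) / (log n) matrices each of which is either a transvection (a matrix equal to the identity except for a single nonzero off-diagonal entry) or an invertible diagonal matrix. -/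
/-- `A` is an elementary matrix over the field `F`: either a transvection
(the identity with a single nonzero off-diagonal entry) or an invertible
diagonal matrix. -/
def IsElementary {n : ℕ} {F : Type*} [Field F]
    (A : Matrix (Fin n) (Fin n) F) : Prop :=
  (∃ (i j : Fin n) (c : F), i ≠ j ∧ c ≠ 0 ∧ A = Matrix.transvection i j c) ∨
  (∃ d : Fin n → F, (∀ i, d i ≠ 0) ∧ A = Matrix.diagonal d)

namespace ElemDec

open Matrix

variable {F : Type*} [Field F]

/-- Elementary matrices over a general index type. -/
def IsEl {ι : Type} [DecidableEq ι] (A : Matrix ι ι F) : Prop :=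
  (∃ (i j : ι) (c : F), i ≠ j ∧ c ≠ 0 ∧ A = Matrix.transvection i j c) ∨
  (∃ d : ι → F, (∀ i, d i ≠ 0) ∧ A = Matrix.diagonal d)

/-- `A` is a product of at most `m` elementary matrices. -/
def Len {ι : Type} [DecidableEq ι] [Fintype ι] (A : Matrix ι ι F) (m : ℕ) : Prop :=
  ∃ L : List (Matrix ι ι F), (∀ B ∈ L, IsEl B) ∧ L.prod = A ∧ L.length ≤ m

section basic
variable {ι κ : Type} [DecidableEq ι] [Fintype ι] [DecidableEq κ] [Fintype κ]

lemma Len.one (m : ℕ) : Len (1 : Matrix ι ι F) m := ⟨[], by simp, by simp, by simp⟩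

lemma Len.mono {A : Matrix ι ι F} {a b : ℕ} (h : Len A a) (hab : a ≤ b) : Len A b := by
  obtain ⟨L, h1, h2, h3⟩ := h
  exact ⟨L, h1, h2, h3.trans hab⟩

lemma Len.mul {A B : Matrix ι ι F} {a b : ℕ} (hA : Len A a) (hB : Len B b) :
    Len (A * B) (a + b) := by
  obtain ⟨L, h1, h2, h3⟩ := hA
  obtain ⟨M, k1, k2, k3⟩ := hB
  refine ⟨L ++ M, ?_, by simp [h2, k2], by simp; omega⟩
  intro X hX
  rcases List.mem_append.1 hX with h | h
  exacts [h1 _ h, k1 _ h]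

lemma Len.of_isEl {A : Matrix ι ι F} (h : IsEl A) : Len A 1 :=
  ⟨[A], by simpa using h, by simp, by simp⟩

lemma Len.hom (f : Matrix ι ι F →* Matrix κ κ F) (hf : ∀ B, IsEl B → IsEl (f B))
    {A : Matrix ι ι F} {a : ℕ} (h : Len A a) : Len (f A) a := by
  obtain ⟨L, h1, h2, h3⟩ := h
  refine ⟨L.map f, ?_, by rw [← map_list_prod, h2], by simpa using h3⟩
  intro B hB
  obtain ⟨C, hC, rfl⟩ := List.mem_map.1 hB
  exact hf _ (h1 _ hC)

lemma Len.reindex (e : ι ≃ κ) {A : Matrix ι ι F} {a : ℕ} (h : Len A a) :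
    Len (Matrix.reindex e e A) a := by
  refine Len.hom ((Matrix.reindexAlgEquiv F F e : Matrix ι ι F →* Matrix κ κ F)) ?_ h
  rintro B (⟨i, j, c, hij, hc, rfl⟩ | ⟨d, hd, rfl⟩)
  · left
    refine ⟨e i, e j, c, by simpa using hij, hc, ?_⟩
    ext x y
    simp [Matrix.transvection, Matrix.one_apply, Matrix.single_apply, Equiv.eq_symm_apply]
  · right
    refine ⟨d ∘ e.symm, fun i => hd _, ?_⟩
    ext x y
    simp [Matrix.diagonal_apply]

lemma Len.transpose {A : Matrix ι ι F} {a : ℕ} (h : Len A a) : Len Aᵀ a := by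
  obtain ⟨L, h1, h2, h3⟩ := h
  refine ⟨(L.map Matrix.transpose).reverse, ?_, by rw [← h2, Matrix.transpose_list_prod],
    by simpa using h3⟩
  intro B hB
  simp only [List.mem_reverse, List.mem_map] at hB
  obtain ⟨C, hC, rfl⟩ := hB
  rcases h1 _ hC with ⟨i, j, c, hij, hc, rfl⟩ | ⟨d, hd, rfl⟩
  · exact Or.inl ⟨j, i, c, hij.symm, hc, by simp [Matrix.transvection]⟩
  · exact Or.inr ⟨d, hd, by simp⟩

lemma Len.inl {A : Matrix κ κ F} {a : ℕ} (h : Len A a) :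
    Len (fromBlocks A 0 0 (1 : Matrix ι ι F)) a := by
  let f : Matrix κ κ F →* Matrix (κ ⊕ ι) (κ ⊕ ι) F :=
    { toFun := fun A => fromBlocks A 0 0 1
      map_one' := by simp
      map_mul' := by intro A B; simp [fromBlocks_multiply] }
  refine Len.hom f ?_ h
  rintro B (⟨i, j, c, hij, hc, rfl⟩ | ⟨d, hd, rfl⟩)
  · left
    refine ⟨Sum.inl i, Sum.inl j, c, by simpa using hij, hc, ?_⟩
    exact (TransvectionStruct.toMatrix_sumInl (p := ι)
      (⟨i, j, hij, c⟩ : TransvectionStruct κ F)).symm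
  · right
    refine ⟨Sum.elim d 1, ?_, ?_⟩
    · rintro (i | i)
      · exact hd i
      · simp
    · change fromBlocks _ _ _ _ = _
      rw [← Matrix.fromBlocks_diagonal]
      congr 1

lemma Len.inr {A : Matrix ι ι F} {a : ℕ} (h : Len A a) :
    Len (fromBlocks (1 : Matrix κ κ F) 0 0 A) a := by
  have := (Len.inl (ι := κ) h).reindex (Equiv.sumComm ι κ)
  convert this using 1
  ext (x | x) (y | y) <;> simp

/-- lower unipotent block matrix. -/
def Lo (Y : Matrix ι κ F) : Matrix (κ ⊕ ι) (κ ⊕ ι) F := fromBlocks 1 0 Y 1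

lemma Lo_add (Y Z : Matrix ι κ F) : Lo (Y + Z) = Lo Y * Lo Z := by
  simp [Lo, fromBlocks_multiply]

lemma Lo_sum {α : Type*} (s : Finset α) (Y : α → Matrix ι κ F) (c : α → ℕ)
    (h : ∀ a ∈ s, Len (Lo (Y a)) (c a)) : Len (Lo (∑ a ∈ s, Y a)) (∑ a ∈ s, c a) := by
  classical
  induction s using Finset.induction_on with
  | empty => simpa [Lo] using Len.one 0
  | insert a s ha ih =>
    rw [Finset.sum_insert ha, Finset.sum_insert ha, Lo_add]
    exact (h a (Finset.mem_insert_self _ _)).mul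
      (ih fun b hb => h b (Finset.mem_insert_of_mem hb))

lemma Lo_single (i : ι) (j : κ) (c : F) : Len (Lo (Matrix.single i j c)) 1 := by
  by_cases hc : c = 0
  · subst hc
    simpa [Lo] using Len.one 1
  · refine Len.of_isEl (Or.inl ⟨Sum.inr i, Sum.inl j, c, by simp, hc, ?_⟩)
    ext (x | x) (y | y) <;> simp [Lo, Matrix.transvection, Matrix.one_apply, Matrix.single_apply]

lemma Lo_naive (Y : Matrix ι κ F) : Len (Lo Y) (Fintype.card ι * Fintype.card κ) := by
  have h := Lo_sum (Finset.univ : Finset (ι × κ))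
    (fun p => Matrix.single p.1 p.2 (Y p.1 p.2)) (fun _ => 1) (fun p _ => Lo_single _ _ _)
  rw [Fintype.sum_prod_type] at h
  have h2 := Matrix.matrix_eq_sum_single Y
  simp only [] at h
  rw [← h2] at h
  simpa [Fintype.card_prod] using h

lemma exists_isUnit (P : Matrix κ κ F) (Q : Matrix ι κ F)
    (h : ∀ v, P *ᵥ v = 0 → Q *ᵥ v = 0 → v = 0) :
    ∃ X : Matrix κ ι F, IsUnit (P + X * Q) := by
  let p := Matrix.toLin' P
  let q := Matrix.toLin' Q
  obtain ⟨C, hC⟩ := Submodule.exists_isCompl (LinearMap.range p)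
  have hfr : Module.finrank F (LinearMap.ker p) = Module.finrank F C := by
    have h1 := LinearMap.finrank_range_add_finrank_ker p
    have h2 := Submodule.finrank_add_eq_of_isCompl hC
    omega
  let e := LinearEquiv.ofFinrankEq _ _ hfr
  have hinj : LinearMap.ker (q.comp (LinearMap.ker p).subtype) = ⊥ := by
    rw [LinearMap.ker_eq_bot']
    rintro ⟨v, hv⟩ hq
    ext1
    exact h v (by simpa [p] using hv) (by simpa [q] using hq)
  obtain ⟨l, hl⟩ := LinearMap.exists_leftInverse_of_injective _ hinj
  let x : (ι → F) →ₗ[F] (κ → F) := C.subtype.comp (e.toLinearMap.comp l)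
  refine ⟨LinearMap.toMatrix' x, ?_⟩
  rw [← Matrix.mulVec_injective_iff_isUnit]
  have key : ∀ v, (P + LinearMap.toMatrix' x * Q) *ᵥ v = p v + x (q v) := by
    intro v
    rw [Matrix.add_mulVec, ← Matrix.mulVec_mulVec, LinearMap.toMatrix'_mulVec]
    simp [p, q]
  intro v w hvw
  rw [← sub_eq_zero]
  set z := v - w with hz
  have hz0 : p z + x (q z) = 0 := by
    rw [← key, hz, Matrix.mulVec_sub, sub_eq_zero]; exact hvw
  have hx : x (q z) ∈ C := by simp [x]
  have hp : p z = 0 := by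
    refine Submodule.disjoint_def.1 hC.disjoint (p z) ⟨z, rfl⟩ ?_
    rw [eq_neg_of_add_eq_zero_left hz0]
    exact C.neg_mem hx
  have hl' : l (q z) = ⟨z, hp⟩ := LinearMap.congr_fun hl ⟨z, hp⟩
  rw [hp, zero_add] at hz0
  have h0 : e (l (q z)) = 0 := by
    ext1; exact hz0
  rw [LinearEquiv.map_eq_zero_iff, hl'] at h0
  exact congrArg Subtype.val h0

lemma step (a u c : ℕ) (ha : ∀ P : Matrix κ κ F, IsUnit P → Len P a)
    (hc : ∀ P : Matrix ι ι F, IsUnit P → Len P c)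
    (hu : ∀ Y : Matrix ι κ F, Len (Lo Y) u)
    (A : Matrix (κ ⊕ ι) (κ ⊕ ι) F) (hA : IsUnit A) : Len A (3 * u + a + c) := by
  have hup : ∀ X : Matrix κ ι F, Len (fromBlocks 1 X 0 1) u := by
    intro X
    have := (hu Xᵀ).transpose
    simpa [Lo, fromBlocks_transpose] using this
  obtain ⟨P, R, Q, S, rfl⟩ : ∃ P R Q S, A = fromBlocks P R Q S :=
    ⟨_, _, _, _, (fromBlocks_toBlocks A).symm⟩
  obtain ⟨X, hX⟩ := exists_isUnit P Q (by
    intro v h1 h2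
    have hinj := Matrix.mulVec_injective_iff_isUnit.2 hA
    have : Sum.elim v (0 : ι → F) = 0 := by
      apply hinj
      rw [Matrix.fromBlocks_mulVec]
      ext (x | x)
      · simpa using congrFun h1 x
      · simpa using congrFun h2 x
    ext x
    exact congrFun this (Sum.inl x))
  set P' := P + X * Q with hP'
  set R' := R + X * S with hR'
  have e1 : fromBlocks P R Q S = fromBlocks 1 (-X) 0 1 * fromBlocks P' R' Q S := by
    simp [fromBlocks_multiply, hP', hR']
  let _ : Invertible P' := hX.invertible
  have e2 := fromBlocks_eq_of_invertible₁₁ P' R' Q S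
  set T := S - Q * ⅟P' * R' with hT
  have e3 : fromBlocks P' 0 0 T = fromBlocks P' 0 0 1 * fromBlocks 1 0 0 T := by
    simp [fromBlocks_multiply]
  have hTu : IsUnit T := by
    rw [Matrix.isUnit_iff_isUnit_det] at hA ⊢
    rw [e1, e2, e3] at hA
    simp only [Matrix.det_mul, Matrix.det_fromBlocks_zero₁₂, Matrix.det_fromBlocks_zero₂₁,
      Matrix.det_one, one_mul, mul_one] at hA
    exact (IsUnit.mul_iff.1 hA).2
  rw [e1, e2, e3]
  refine ((hup (-X)).mul (((hu (Q * ⅟P')).mul ((ha P' hX).inl.mul (hc T hTu).inr)).mul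
    (hup _))).mono (by omega)

end basic

lemma naive (n : ℕ) : ∀ A : Matrix (Fin n) (Fin n) F, IsUnit A → Len A (3 * n ^ 2) := by
  induction n with
  | zero =>
    intro A _
    rw [Subsingleton.elim A 1]
    exact Len.one _
  | succ n ih =>
    intro A hA
    have e : Fin 1 ⊕ Fin n ≃ Fin (n + 1) := finSumFinEquiv.trans (finCongr (by omega))
    have hA' : IsUnit (Matrix.reindexAlgEquiv F F e.symm A) := hA.map _
    have := step (κ := Fin 1) (ι := Fin n) 1 n (3 * n ^ 2) (by
      intro P hP
      refine Len.of_isEl (Or.inr ⟨fun i => P i i, ?_, ?_⟩)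
      · intro i
        rw [Matrix.isUnit_iff_isUnit_det, Matrix.det_fin_one] at hP
        rw [Subsingleton.elim i 0]
        exact hP.ne_zero
      · ext i j
        rw [Subsingleton.elim i j]; simp) ih (by
      intro Y
      simpa using Lo_naive Y) _ hA'
    have h2 := this.reindex e
    rw [Matrix.coe_reindexAlgEquiv] at h2
    refine Len.mono (by simpa using h2) ?_
    ring_nf; omega

lemma exists_row {k : ℕ} (v : Fin k → F) (hv : v ≠ 0) :
    ∃ (j : Fin k) (G : Matrix (Fin k) (Fin k) F), IsUnit G ∧ G j = v := by
  obtain ⟨j, hj⟩ := Function.ne_iff.1 hv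
  refine ⟨j, (1 : Matrix (Fin k) (Fin k) F).updateRow j v, ?_, by simp⟩
  rw [Matrix.isUnit_iff_isUnit_det, ← Matrix.cramer_transpose_apply]
  simpa using hj

lemma Lo_rank_one {k m : ℕ} (s : Finset (Fin m)) (v : Fin k → F) :
    Len (Lo (Matrix.of fun i j => if i ∈ s then v j else 0)) (s.card + 6 * k ^ 2) := by
  by_cases hv : v = 0
  · subst hv
    convert Len.one (F := F) (ι := Fin k ⊕ Fin m) _
    have : (Matrix.of fun i j => if i ∈ s then (0 : Fin k → F) j else 0 : 
      Matrix (Fin m) (Fin k) F) = 0 := by ext; simp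
    rw [this]; simp [Lo]
  obtain ⟨j, G, hG, hj⟩ := exists_row v hv
  have h1 : Len (Lo (∑ i ∈ s, Matrix.single i j (1 : F))) s.card := by
    simpa using Lo_sum s (fun i => Matrix.single i j (1 : F)) (fun _ => 1)
      (fun i _ => Lo_single _ _ _)
  set Z := ∑ i ∈ s, Matrix.single i j (1 : F) with hZ
  have hGd : IsUnit G.det := (Matrix.isUnit_iff_isUnit_det _).1 hG
  have h2 : (Matrix.of fun i j => if i ∈ s then v j else 0) = Z * G := by
    ext x y
    rw [hZ, Matrix.sum_mul, Matrix.sum_apply]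
    have : ∀ i, (Matrix.single i j (1 : F) * G) x y = if x = i then v y else 0 := by
      intro i
      by_cases h : x = i
      · subst h; simp [hj]
      · simp [h]
    simp [this]
  have h3 : Lo (Z * G) = fromBlocks G⁻¹ 0 0 1 * Lo Z * fromBlocks G 0 0 1 := by
    simp [Lo, fromBlocks_multiply, Matrix.nonsing_inv_mul _ hGd]
  rw [h2, h3]
  have hG' : IsUnit G⁻¹ := by
    rw [Matrix.isUnit_nonsing_inv_iff]; exact hG
  exact (((naive k _ hG').inl.mul h1).mul (naive k _ hG).inl).mono (by omega)

lemma Lo_good [Fintype F] {k m : ℕ} (Y : Matrix (Fin m) (Fin k) F) :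
    Len (Lo Y) (m + 6 * k ^ 2 * Fintype.card F ^ k) := by
  classical
  let s : (Fin k → F) → Finset (Fin m) := fun v => Finset.univ.filter (fun i => Y.row i = v)
  have hs : ∀ v i, i ∈ s v ↔ Y.row i = v := by intro v i; simp [s]
  have h := Lo_sum (Finset.univ : Finset (Fin k → F))
    (fun v => (Matrix.of fun i j => if i ∈ s v then v j else 0 :
      Matrix (Fin m) (Fin k) F)) (fun v => (s v).card + 6 * k ^ 2)
      (fun v _ => Lo_rank_one (s v) v)
  have h2 : ∑ v : Fin k → F, (Matrix.of fun i j => if i ∈ s v then v j else 0 :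
      Matrix (Fin m) (Fin k) F) = Y := by
    ext i j
    rw [Matrix.sum_apply]
    simp only [Matrix.of_apply, hs]
    rw [Finset.sum_ite_eq]
    simp
  rw [h2] at h
  have h3 : (Finset.univ : Finset (Fin m)).card = ∑ v : Fin k → F, (s v).card :=
    Finset.card_eq_sum_card_fiberwise (by intro x _; simp)
  have h4 : ∑ v : Fin k → F, ((s v).card + 6 * k ^ 2) = m + 6 * k ^ 2 * Fintype.card F ^ k := by
    rw [Finset.sum_add_distrib, ← h3, Finset.sum_const, Finset.card_univ, Finset.card_univ,
      Fintype.card_fun, Fintype.card_fin, Fintype.card_fin, smul_eq_mul, mul_comm (6 * k ^ 2)]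
  rw [← h4]
  exact h

lemma blocks [Fintype F] {k n : ℕ} (hk : 0 < k) (t : ℕ) : ∀ m, m < (t + 1) * k → m ≤ n →
    ∀ A : Matrix (Fin m) (Fin m) F, IsUnit A →
    Len A (t * (3 * (n + 6 * k ^ 2 * Fintype.card F ^ k) + 3 * k ^ 2) + 3 * k ^ 2) := by
  induction t with
  | zero =>
    intro m hm _ A hA
    refine (naive m A hA).mono ?_
    have : m ^ 2 ≤ k ^ 2 := Nat.pow_le_pow_left (by omega) 2
    omega
  | succ t ih =>
    intro m hm hmn A hA
    by_cases hmk : m < k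
    · refine (naive m A hA).mono ?_
      have : m ^ 2 ≤ k ^ 2 := Nat.pow_le_pow_left (by omega) 2
      omega
    obtain ⟨r, rfl⟩ : ∃ r, m = k + r := ⟨m - k, by omega⟩
    have e : Fin k ⊕ Fin r ≃ Fin (k + r) := finSumFinEquiv
    have hA' : IsUnit (Matrix.reindexAlgEquiv F F e.symm A) := hA.map _
    have := step (κ := Fin k) (ι := Fin r) (3 * k ^ 2) (r + 6 * k ^ 2 * Fintype.card F ^ k) _
      (naive k) (ih r (by linarith) (by omega)) Lo_good _ hA'
    have h2 := this.reindex e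
    rw [Matrix.coe_reindexAlgEquiv] at h2
    refine Len.mono (by simpa using h2) ?_
    have : r ≤ n := by omega
    rw [Nat.add_mul t 1, one_mul]
    omega

end ElemDec

/-- Generalization to a finite field `F` of order `q ≥ 2`: every invertible
`n × n` matrix over `F` is a product of at most
`C · n² · (log q) / (log n)` elementary matrices. -/
theorem finite_field_elementary_decomposition (F : Type*) [Field F] [Fintype F]
    (hq : 2 ≤ Fintype.card F) :
    ∃ C : ℝ, 0 < C ∧ ∀ n : ℕ, 2 ≤ n →
      ∀ A : Matrix (Fin n) (Fin n) F, IsUnit A →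
        ∃ L : List (Matrix (Fin n) (Fin n) F),
          (∀ B ∈ L, IsElementary B) ∧ L.prod = A ∧
          (L.length : ℝ) ≤
            C * (n : ℝ) ^ 2 * Real.log (Fintype.card F) / Real.log n := by
  set q := Fintype.card F with hqd
  set D := 4 * q with hD
  have hlq : 0 < Real.log q := Real.log_pos (by exact_mod_cast hq)
  have hlD : 0 < Real.log D := Real.log_pos (by norm_cast; omega)
  have hDpos : (0 : ℝ) < D := by norm_cast; omega
  refine ⟨30 * D * Real.log D / Real.log q, by positivity, ?_⟩
  intro n hn A hA
  set k := Nat.log D n + 1 with hk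
  have hkn : k ≤ n := Nat.log_lt_self D (by omega)
  obtain ⟨L, h1, h2, h3⟩ := ElemDec.blocks (n := n) (k := k) (by omega) (n / k) n
    (by rw [mul_comm]; exact Nat.lt_mul_div_succ n (by omega)) le_rfl A hA
  refine ⟨L, h1, h2, ?_⟩
  have hlt : n < D ^ k := Nat.lt_pow_succ_log_self (by omega) n
  have hle : D ^ k ≤ D * n := by
    rw [hk, pow_succ, mul_comm]
    exact Nat.mul_le_mul_left _ (Nat.pow_log_le_self D (by omega))
  have hk4 : k ^ 2 ≤ 4 ^ k := by
    have : k < 2 ^ k := Nat.lt_two_pow_self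
    calc k ^ 2 ≤ (2 ^ k) ^ 2 := Nat.pow_le_pow_left this.le 2
      _ = 4 ^ k := by rw [← pow_mul, mul_comm, pow_mul]; norm_num
  have hkq : k ^ 2 * q ^ k ≤ D * n := by
    refine le_trans ?_ hle
    rw [hD, mul_pow]
    exact Nat.mul_le_mul_right _ hk4
  have hk2 : k ^ 2 ≤ D * n := le_trans (Nat.le_mul_of_pos_right _ (by positivity)) hkq
  have hnD : n ≤ D * n := Nat.le_mul_of_pos_left _ (by omega)
  have hcost : L.length ≤ (n / k) * (24 * (D * n)) + 3 * (D * n) := by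
    refine h3.trans ?_
    gcongr
    have : 6 * k ^ 2 * Fintype.card F ^ k = 6 * (k ^ 2 * q ^ k) := by rw [mul_assoc]
    rw [this]
    omega
  have hkpos : (0 : ℝ) < k := by norm_cast; omega
  have hlogn : 0 < Real.log n := Real.log_pos (by norm_cast)
  have hnpos : (0 : ℝ) < n := by norm_cast; omega
  have hlogk : Real.log n ≤ k * Real.log D := by
    rw [← Real.log_pow]
    exact Real.log_le_log hnpos (by exact_mod_cast hlt.le)
  have hmain : (L.length : ℝ) ≤ 30 * D * n ^ 2 / k := by
    have hc : (L.length : ℝ) ≤ ((n / k : ℕ) : ℝ) * (24 * (D * n)) + 3 * (D * n) := by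
      exact_mod_cast hcost
    have hd : ((n / k : ℕ) : ℝ) ≤ n / k := Nat.cast_div_le
    have h1k : (1 : ℝ) ≤ n / k := by
      rw [le_div_iff₀ hkpos, one_mul]; exact_mod_cast hkn
    have hDn : (0 : ℝ) < D * n := by positivity
    calc (L.length : ℝ) ≤ (n / k) * (24 * (D * n)) + (n / k) * (3 * (D * n)) := by
          nlinarith
      _ = 27 * (D * n) * (n / k) := by ring
      _ ≤ 30 * (D * n) * (n / k) := by gcongr; norm_num
      _ = _ := by ring
  refine hmain.trans ?_
  have : 30 * D * Real.log D / Real.log q * (n : ℝ) ^ 2 * Real.log q / Real.log n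
      = 30 * D * n ^ 2 * (Real.log D / Real.log n) := by
    field_simp
  rw [this, mul_div_assoc, ]
  rw [div_eq_mul_inv, ← mul_assoc, ← div_eq_mul_inv, mul_div_assoc, div_eq_mul_inv]
  rw [← mul_assoc]
  gcongr
  rw [inv_eq_one_div, div_le_div_iff₀ hkpos hlogn]
  linarith
end
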